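/- arXiv:1405.1803 — 8 statements merged into one kernel-verified Lean document; each statement's English description precedes it below -/
import Mathlib

section
/- For all positive integers n, q and every natural number k with 0 \le k \le (q-1)n, the polynomial coefficient has the integral representation C(n,q,k) = (2/\pi) \int_0^{\pi/2} D_q(\theta)^n \cos(((q-1)n - 2k)\theta) \, d\theta, where D_q(\theta) = \sin(q\theta)/\sin(\theta) for 0 < \theta \le \pi/2 and D_q(0) = q (the continuous extension). -/
open MeasureTheory Real

/-- The polynomial coefficient `C(n,q,k)`: the coefficient of `x^k` in
`(1 + x + x^2 + ⋯ + x^(q-1))^n`. -/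
noncomputable def polyCoeff (n q k : ℕ) : ℕ :=
  ((∑ i ∈ Finset.range q, Polynomial.X ^ i : Polynomial ℕ) ^ n).coeff k

/-- The Dirichlet-type kernel `D_q(θ) = sin (qθ) / sin θ`, extended continuously by
`D_q(0) = q`. -/
noncomputable def Dker (q : ℕ) (θ : ℝ) : ℝ :=
  if θ = 0 then (q : ℝ) else Real.sin (q * θ) / Real.sin θ

/-!
For `θ ∈ [0, π/2]`, summing the geometric series gives
`1 + e^{2iθ} + ⋯ + e^{2i(q-1)θ} = D_q(θ) e^{i(q-1)θ}`. Hence `D_q(θ)^n cos (((q-1)n - 2k)θ)` is the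
real part of `p(e^{2iθ}) e^{-2ikθ}` with `p = (1 + x + ⋯ + x^{q-1})^n`, and since the functions
`cos (2mθ)` with `m ≠ 0` integrate to zero over `[0, π/2]`, integration isolates the coefficient
of `x^k` in `p`.
-/

open Polynomial
open Complex (I)

theorem exp_two_mul_mul_I_sub_one (z : ℂ) :
    Complex.exp (2 * z * I) - 1 = 2 * I * (Complex.sin z * Complex.exp (z * I)) := by
  have hexp : Complex.exp (2 * z * I) = Complex.exp (z * I) ^ 2 := by
    rw [← Complex.exp_nat_mul]
    ring_nf
  rw [hexp, Complex.exp_mul_I]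
  linear_combination Complex.sin_sq_add_cos_sq z - Complex.sin z ^ 2 * Complex.I_sq

theorem sin_mul_exp_mul_geom_sum_exp (q : ℕ) (z : ℂ) :
    Complex.sin z * Complex.exp (z * I) * ∑ i ∈ Finset.range q, Complex.exp (2 * z * I) ^ i =
      Complex.sin (q * z) * Complex.exp (q * z * I) := by
  refine mul_left_cancel₀ (mul_ne_zero two_ne_zero Complex.I_ne_zero) ?_
  rw [← mul_assoc, ← exp_two_mul_mul_I_sub_one, mul_geom_sum, ← exp_two_mul_mul_I_sub_one,
    ← Complex.exp_nat_mul]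
  ring_nf

theorem integral_cos_two_mul_int_mul (m : ℤ) :
    ∫ θ in (0 : ℝ)..(π / 2), cos (2 * m * θ) = if m = 0 then π / 2 else 0 := by
  split_ifs with hm
  · simp [hm]
  · have hm' : (2 * m : ℝ) ≠ 0 := by positivity
    rw [intervalIntegral.integral_comp_mul_left _ hm', integral_cos,
      show 2 * (m : ℝ) * (π / 2) = m * π by ring, sin_int_mul_pi]
    simp

theorem re_aeval_exp_mul_exp_eq_sum_cos (p : ℝ[X]) (k : ℕ) (θ : ℝ) :
    (aeval (Complex.exp (2 * θ * I)) p * Complex.exp (-(2 * k * θ) * I)).re =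
      ∑ j ∈ p.support, p.coeff j * cos (2 * ((j - k : ℤ) : ℝ) * θ) := by
  have hexp (j : ℕ) :
      Complex.exp (2 * θ * I) ^ j * Complex.exp (-(2 * k * θ) * I) =
        Complex.exp ((2 * ((j - k : ℤ) : ℝ) * θ : ℝ) * I) := by
    rw [← Complex.exp_nat_mul, ← Complex.exp_add]
    push_cast
    ring_nf
  simp only [aeval_def, eval₂_eq_sum, Polynomial.sum, Complex.coe_algebraMap, Finset.sum_mul,
    mul_assoc _ (_ ^ _), hexp, Complex.re_sum, Complex.re_ofReal_mul, Complex.exp_ofReal_mul_I_re]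

theorem integral_re_aeval_exp_mul_exp (p : ℝ[X]) (k : ℕ) :
    ∫ θ in (0 : ℝ)..(π / 2),
        (aeval (Complex.exp (2 * θ * I)) p * Complex.exp (-(2 * k * θ) * I)).re =
      π / 2 * p.coeff k := by
  simp only [re_aeval_exp_mul_exp_eq_sum_cos]
  rw [intervalIntegral.integral_finsetSum fun j _ ↦
    Continuous.intervalIntegrable (by fun_prop) _ _]
  simp only [intervalIntegral.integral_const_mul, integral_cos_two_mul_int_mul, sub_eq_zero,
    Nat.cast_inj, mul_ite, mul_zero, Finset.sum_ite_eq', mem_support_iff, ite_not]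
  split_ifs with hcoeff
  · rw [hcoeff, mul_zero]
  · rw [mul_comm]

theorem cast_polyCoeff {R : Type*} [Semiring R] (n q k : ℕ) :
    (polyCoeff n q k : R) = ((∑ i ∈ Finset.range q, X ^ i : R[X]) ^ n).coeff k := by
  have hmap : ((∑ i ∈ Finset.range q, X ^ i : ℕ[X]) ^ n).map (Nat.castRingHom R) =
      (∑ i ∈ Finset.range q, X ^ i : R[X]) ^ n := by
    simp [Polynomial.map_sum]
  rw [← hmap, coeff_map, polyCoeff, eq_natCast]

theorem Dker_mul_exp_eq_geom_sum (q : ℕ) {θ : ℝ} (hθ : θ ∈ Set.Ioo (-π) π) :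
    Dker q θ * Complex.exp ((q - 1) * θ * I) =
      ∑ i ∈ Finset.range q, Complex.exp (2 * θ * I) ^ i := by
  rcases eq_or_ne θ 0 with rfl | hθ₀
  · simp [Dker]
  have hsin : Complex.sin θ ≠ 0 := by
    exact_mod_cast mt (Real.sin_eq_zero_iff_of_lt_of_lt hθ.1 hθ.2).mp hθ₀
  have hexp : Complex.exp ((q - 1) * θ * I) * Complex.exp (θ * I) = Complex.exp (q * θ * I) := by
    rw [← Complex.exp_add]
    ring_nf
  refine mul_left_cancel₀ (mul_ne_zero hsin (Complex.exp_ne_zero (θ * I))) ?_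
  rw [sin_mul_exp_mul_geom_sum_exp, ← hexp, Dker, if_neg hθ₀]
  push_cast
  field_simp

theorem Dker_pow_mul_cos_eq_re_aeval (n q k : ℕ) {θ : ℝ} (hθ : θ ∈ Set.Ioo (-π) π) :
    Dker q θ ^ n * cos ((((q : ℝ) - 1) * n - 2 * k) * θ) =
      (aeval (Complex.exp (2 * θ * I)) ((∑ i ∈ Finset.range q, X ^ i : ℝ[X]) ^ n) *
        Complex.exp (-(2 * k * θ) * I)).re := by
  have hexp : Complex.exp ((q - 1) * θ * I) ^ n * Complex.exp (-(2 * k * θ) * I) =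
      Complex.exp ((((q - 1) * n - 2 * k) * θ : ℝ) * I) := by
    rw [← Complex.exp_nat_mul, ← Complex.exp_add]
    push_cast
    ring_nf
  simp only [map_pow, map_sum, aeval_X]
  rw [← Dker_mul_exp_eq_geom_sum q hθ, mul_pow, mul_assoc, hexp, ← Complex.ofReal_pow,
    Complex.re_ofReal_mul, Complex.exp_ofReal_mul_I_re]

theorem polyCoeff_integral_repr_general (n q k : ℕ) :
    (polyCoeff n q k : ℝ) =
      2 / π * ∫ θ in (0 : ℝ)..(π / 2), Dker q θ ^ n * cos ((((q : ℝ) - 1) * n - 2 * k) * θ) := by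
  have hsubset : Set.uIcc 0 (π / 2) ⊆ Set.Ioo (-π) π := by
    rw [Set.uIcc_of_le (by positivity)]
    exact Set.Icc_subset_Ioo (by linarith [pi_pos]) (by linarith [pi_pos])
  rw [intervalIntegral.integral_congr fun θ hθ ↦
      Dker_pow_mul_cos_eq_re_aeval n q k (hsubset hθ),
    integral_re_aeval_exp_mul_exp, cast_polyCoeff]
  field_simp

theorem polyCoeff_integral_repr (n q k : ℕ) (hn : 0 < n) (hq : 0 < q)
    (hk : k ≤ (q - 1) * n) :
    (polyCoeff n q k : ℝ) =
      (2 / Real.pi) *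
        ∫ θ in (0 : ℝ)..(Real.pi / 2),
          (Dker q θ) ^ n * Real.cos ((((q : ℝ) - 1) * n - 2 * k) * θ) :=
  polyCoeff_integral_repr_general n q k
end

section
/- For all positive integers n, q, the finite sequence k \mapsto C(n,q,k), 0 \le k \le (q-1)n, is symmetric and unimodal with maximum at the middle: C(n,q,k) = C(n,q,(q-1)n-k) for all 0 \le k \le (q-1)n, and C(n,q,k) \le C(n,q,l) whenever k \le l and 2l \le (q-1)n. In particular the maximum is attained at k = (q-1)n/2 when (q-1)n is even and at k = ((q-1)n-1)/2 (equivalently ((q-1)n+1)/2) when (q-1)n is odd. -/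
/-!
Multiplying a symmetric unimodal `p` by `G = 1 + X + ⋯ + X ^ m` preserves symmetry, because
reflection is multiplicative, and unimodality: by the telescoping `G * X + 1 = G + X ^ (m + 1)`, the
coefficients of `X ^ (k + 1)` and `X ^ k` in `p * G` differ by `p_{k+1} - p_{k-m}`, and below the
middle of `p * G` the index `k + 1` is at least as close to the middle of `p` as `k - m`.
-/

open Polynomial Finset

section GeomSum

variable {R : Type*} [Semiring R]

theorem coeff_geom_sum_X (q k : ℕ) :
    (∑ i ∈ range q, X ^ i : R[X]).coeff k = if k < q then 1 else 0 := by
  simp [coeff_X_pow]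

theorem natDegree_geom_sum_X_le (m : ℕ) : (∑ i ∈ range (m + 1), X ^ i : R[X]).natDegree ≤ m :=
  natDegree_sum_le_of_forall_le _ _ fun i hi ↦
    (natDegree_X_pow_le i).trans (Nat.le_of_lt_succ (mem_range.mp hi))

theorem reflect_geom_sum_X (m : ℕ) :
    reflect m (∑ i ∈ range (m + 1), X ^ i : R[X]) = ∑ i ∈ range (m + 1), X ^ i := by
  ext k
  rw [coeff_reflect, coeff_geom_sum_X, coeff_geom_sum_X]
  rcases le_or_gt k m with hk | hk
  · rw [revAt_le hk, if_pos (by omega), if_pos (by omega)]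
  · rw [revAt_eq_self_of_lt hk]

theorem coeff_succ_mul_geom_sum_X (p : R[X]) (q k : ℕ) :
    (p * ∑ i ∈ range q, X ^ i).coeff (k + 1) + (if q ≤ k + 1 then p.coeff (k + 1 - q) else 0) =
      (p * ∑ i ∈ range q, X ^ i).coeff k + p.coeff (k + 1) := by
  have telescope : (∑ i ∈ range q, X ^ i : R[X]) + X ^ q = (∑ i ∈ range q, X ^ i) * X + 1 := by
    rw [← sum_range_succ, sum_range_succ', sum_mul, pow_zero]
    simp only [pow_succ]
  rw [← coeff_mul_X_pow', ← coeff_add, ← mul_add, telescope, mul_add, mul_one, coeff_add,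
    ← mul_assoc, coeff_mul_X]

end GeomSum

/-- `p`, regarded as a polynomial of formal degree `N`, has nonnegative coefficients
`p_0, …, p_N` that are symmetric about `N / 2` and increase up to the middle. Nonnegativity is
imposed on `p_0` only, since it propagates to the others. -/
structure IsSymmUnimodal {R : Type*} [Semiring R] [Preorder R] (N : ℕ) (p : R[X]) : Prop where
  natDegree_le : p.natDegree ≤ N
  reflect_eq : reflect N p = p
  coeff_zero_nonneg : 0 ≤ p.coeff 0
  monotoneOn_coeff : MonotoneOn p.coeff (Set.Iic (N / 2))

namespace IsSymmUnimodal

variable {R : Type*} [Semiring R] [Preorder R] {N : ℕ} {p : R[X]}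

theorem coeff_symm (hp : IsSymmUnimodal N p) {k : ℕ} (hk : k ≤ N) :
    p.coeff k = p.coeff (N - k) := by
  rw [← revAt_le hk, ← coeff_reflect, hp.reflect_eq]

theorem coeff_le_coeff_of_add_le (hp : IsSymmUnimodal N p) {i j : ℕ} (hij : i ≤ j)
    (hadd : i + j ≤ N) : p.coeff i ≤ p.coeff j := by
  rcases le_or_gt j (N / 2) with hj | hj
  · exact hp.monotoneOn_coeff (hij.trans hj) hj hij
  · rw [hp.coeff_symm (k := j) (by omega)]
    exact hp.monotoneOn_coeff (Set.mem_Iic.mpr (by omega)) (Set.mem_Iic.mpr (by omega)) (by omega)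

theorem coeff_nonneg (hp : IsSymmUnimodal N p) (k : ℕ) : 0 ≤ p.coeff k := by
  rcases le_or_gt k N with hk | hk
  · exact hp.coeff_zero_nonneg.trans (hp.coeff_le_coeff_of_add_le k.zero_le (by omega))
  · rw [coeff_eq_zero_of_natDegree_lt (hp.natDegree_le.trans_lt hk)]

theorem coeff_le_coeff_half (hp : IsSymmUnimodal N p) {k : ℕ} (hk : k ≤ N) :
    p.coeff k ≤ p.coeff (N / 2) := by
  rcases le_or_gt k (N / 2) with hle | hgt
  · exact hp.monotoneOn_coeff hle Set.self_mem_Iic hle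
  · rw [hp.coeff_symm hk]
    exact hp.coeff_le_coeff_of_add_le (by omega) (by omega)

theorem one [ZeroLEOneClass R] : IsSymmUnimodal 0 (1 : R[X]) where
  natDegree_le := natDegree_one.le
  reflect_eq := by rw [reflect_one, pow_zero]
  coeff_zero_nonneg := by rw [coeff_one_zero]; exact zero_le_one
  monotoneOn_coeff := by
    rw [Nat.zero_div, ← Nat.bot_eq_zero, Set.Iic_bot]
    exact Set.subsingleton_singleton.monotoneOn _

variable [IsOrderedCancelAddMonoid R]

theorem coeff_mul_geom_sum_X_le_coeff_succ (hp : IsSymmUnimodal N p) {m k : ℕ}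
    (hk : 2 * (k + 1) ≤ N + m) :
    (p * ∑ i ∈ range (m + 1), X ^ i).coeff k ≤
      (p * ∑ i ∈ range (m + 1), X ^ i).coeff (k + 1) := by
  have removed_le_added :
      (if m + 1 ≤ k + 1 then p.coeff (k + 1 - (m + 1)) else 0) ≤ p.coeff (k + 1) := by
    split_ifs with hmk
    · exact hp.coeff_le_coeff_of_add_le (by omega) (by omega)
    · exact hp.coeff_nonneg (k + 1)
  refine le_of_add_le_add_right (a := p.coeff (k + 1)) ?_
  rw [← coeff_succ_mul_geom_sum_X]
  gcongr

theorem mul_geom_sum_X (hp : IsSymmUnimodal N p) (m : ℕ) :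
    IsSymmUnimodal (N + m) (p * ∑ i ∈ range (m + 1), X ^ i) where
  natDegree_le := natDegree_mul_le_of_le hp.natDegree_le (natDegree_geom_sum_X_le m)
  reflect_eq := by
    rw [reflect_mul _ _ hp.natDegree_le (natDegree_geom_sum_X_le m), hp.reflect_eq,
      reflect_geom_sum_X]
  coeff_zero_nonneg := by
    rw [mul_coeff_zero, coeff_geom_sum_X, if_pos m.succ_pos, mul_one]
    exact hp.coeff_zero_nonneg
  monotoneOn_coeff := by
    refine monotoneOn_of_le_succ Set.ordConnected_Iic fun k _ _ hk ↦ ?_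
    rw [Order.succ_eq_add_one, Set.mem_Iic] at hk
    exact hp.coeff_mul_geom_sum_X_le_coeff_succ (by omega)

theorem geom_sum_X_pow [ZeroLEOneClass R] (m n : ℕ) :
    IsSymmUnimodal (m * n) ((∑ i ∈ range (m + 1), X ^ i : R[X]) ^ n) := by
  induction n with
  | zero => simpa only [mul_zero, pow_zero] using one
  | succ n ih => simpa only [Nat.mul_succ, pow_succ] using ih.mul_geom_sum_X m

end IsSymmUnimodal

theorem polyCoeff_symmetric_unimodal (n q : ℕ) (hn : 0 < n) (hq : 0 < q) :
    (∀ k ≤ (q - 1) * n, polyCoeff n q k = polyCoeff n q ((q - 1) * n - k)) ∧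
    (∀ k l : ℕ, k ≤ l → 2 * l ≤ (q - 1) * n → polyCoeff n q k ≤ polyCoeff n q l) ∧
    (∀ k ≤ (q - 1) * n, polyCoeff n q k ≤ polyCoeff n q ((q - 1) * n / 2)) := by
  have key := IsSymmUnimodal.geom_sum_X_pow (R := ℕ) (q - 1) n
  rw [Nat.sub_add_cancel hq] at key
  exact ⟨fun _ hk ↦ key.coeff_symm hk,
    fun _ _ hkl hl ↦ key.coeff_le_coeff_of_add_le hkl (by omega),
    fun _ hk ↦ key.coeff_le_coeff_half hk⟩
end

section
/- Let m, s be natural numbers and let a, b : \mathbb{N} \to \mathbb{R} be nonnegative sequences supported on {0,...,m} and {0,...,s} respectively, each symmetric (a_i = a_{m-i} for 0 \le i \le m, b_j = b_{s-j} for 0 \le j \le s) and unimodal (a_i \le a_j whenever i \le j and 2j \le m, and similarly for b). Then their convolution c_k = \sum_{i} a_i b_{k-i} is symmetric on {0,...,m+s} (c_k = c_{m+s-k}) and unimodal (c_k \le c_l whenever k \le l and 2l \le m+s). -/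
/-!
Extend both sequences by zero to `ℤ`, and let `f`, `g` be the extensions, symmetric about `m / 2`
and `s / 2`. Symmetry of the convolution is the substitution `i ↦ m - i`. For unimodality, let
`k ≤ l` with `k + l ≤ m + s` and consider the involution `σ i = k + l - s - i` of `ℤ`. Since
`g (k - i) = g (l - σ i)`, the two values of the convolution to be compared are the sums of
`f i * g (l - σ i)` and of `f i * g (l - i)`. On an orbit `{i, σ i}` both `f` and `i ↦ g (l - i)`
are monotone: its two points add up to `k + l - s ≤ m`, so the larger one is at least as close to
`m / 2`, and `l` minus the larger one is at least as close to `s / 2` because `k ≤ l`. The two-term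
rearrangement inequality therefore applies on each orbit.
-/

variable {R : Type*}

section Rearrangement

theorem two_nsmul_finsum_eq_finsum_add_comp {ι M : Type*} [AddCommMonoid M] {σ : ι → ι}
    (hσ : Function.Bijective σ) {f : ι → M} (hf : f.HasFiniteSupport) :
    2 • ∑ᶠ i, f i = ∑ᶠ i, (f i + f (σ i)) := by
  rw [finsum_add_distrib hf (hf.preimage hσ.injective.injOn), finsum_comp σ hσ, two_nsmul]

variable [Semiring R] [LinearOrder R] [IsStrictOrderedRing R] [ExistsAddOfLE R] {ι : Type*}
  {f g : ι → R}

theorem mul_add_mul_le_of_monovaryOn_pair {i j : ι} (h : MonovaryOn f g {i, j}) :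
    f i * g j + f j * g i ≤ f i * g i + f j * g j := by
  rcases lt_trichotomy (g i) (g j) with hij | hij | hij
  · exact mul_add_mul_le_mul_add_mul (h (by simp) (by simp) hij) hij.le
  · rw [hij]
  · exact mul_add_mul_le_mul_add_mul' (h (by simp) (by simp) hij) hij.le

theorem finsum_mul_comp_le_finsum_mul_of_involutive {σ : ι → ι} (hσ : Function.Involutive σ)
    (hf : f.HasFiniteSupport) (h : ∀ i, MonovaryOn f g {i, σ i}) :
    ∑ᶠ i, f i * g (σ i) ≤ ∑ᶠ i, f i * g i := by
  have hf_mul (u : ι → R) : (fun i => f i * u i).HasFiniteSupport :=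
    hf.subset (Function.support_mul_subset_left f u)
  have hf_comp_mul (u : ι → R) : (fun i => f (σ i) * u i).HasFiniteSupport :=
    (hf.preimage hσ.injective.injOn).subset (Function.support_mul_subset_left (f ∘ σ) u)
  refine le_of_nsmul_le_nsmul_right two_ne_zero ?_
  calc 2 • ∑ᶠ i, f i * g (σ i)
    _ = ∑ᶠ i, (f i * g (σ i) + f (σ i) * g (σ (σ i))) :=
      two_nsmul_finsum_eq_finsum_add_comp hσ.bijective (hf_mul fun i => g (σ i))
    _ = ∑ᶠ i, (f i * g (σ i) + f (σ i) * g i) := by simp only [hσ _]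
    _ ≤ ∑ᶠ i, (f i * g i + f (σ i) * g (σ i)) :=
      finsum_le_finsum' ((hf_mul _).add (hf_comp_mul _)) ((hf_mul _).add (hf_comp_mul _))
        fun i => mul_add_mul_le_of_monovaryOn_pair (h i)
    _ = 2 • ∑ᶠ i, f i * g i :=
      (two_nsmul_finsum_eq_finsum_add_comp hσ.bijective (hf_mul g)).symm

end Rearrangement

/-- `f : ℤ → R` is symmetric and unimodal about `d / 2`. Unlike in the notion for sequences
supported on `{0, …, d}`, no condition is imposed on the support of `f`. -/
structure IsSymmUnimodal_s5 [Preorder R] (d : ℤ) (f : ℤ → R) : Prop where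
  apply_sub (i : ℤ) : f (d - i) = f i
  monotoneOn : MonotoneOn f {i | 2 * i ≤ d}

/-- The convolution of two functions on `ℤ`. The sum is a `finsum`, hence has the junk value `0`
where infinitely many summands are nonzero. -/
noncomputable def intConv [NonUnitalNonAssocSemiring R] (f g : ℤ → R) (k : ℤ) : R :=
  ∑ᶠ i, f i * g (k - i)

theorem intConv_apply_sub [NonUnitalNonAssocSemiring R] {m s : ℤ} {f g : ℤ → R}
    (hf : ∀ i, f (m - i) = f i) (hg : ∀ i, g (s - i) = g i) (k : ℤ) :
    intConv f g (m + s - k) = intConv f g k :=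
  calc ∑ᶠ i, f i * g (m + s - k - i)
    _ = ∑ᶠ i, f (m - i) * g (m + s - k - (m - i)) :=
      (finsum_comp_equiv (Equiv.subLeft m) (f := fun i => f i * g (m + s - k - i))).symm
    _ = ∑ᶠ i, f (m - i) * g (s - (k - i)) := finsum_congr fun i => by
      congr 2
      ring
    _ = ∑ᶠ i, f i * g (k - i) := by simp only [hf, hg]

namespace IsSymmUnimodal_s5

theorem apply_le_apply [Preorder R] {d : ℤ} {f : ℤ → R} (hf : IsSymmUnimodal_s5 d f) {i j : ℤ}
    (hij : i ≤ j) (hd : i + j ≤ d) : f i ≤ f j := by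
  rcases le_total (2 * j) d with hj | hj
  · exact hf.monotoneOn (show 2 * i ≤ d by lia) hj hij
  · rw [← hf.apply_sub j]
    exact hf.monotoneOn (show 2 * i ≤ d by lia) (show 2 * (d - j) ≤ d by lia) (by lia)

variable [Semiring R] [LinearOrder R] [IsStrictOrderedRing R] [ExistsAddOfLE R] {m s : ℤ}
  {f g : ℤ → R}

theorem intConv_le_intConv (hf : IsSymmUnimodal_s5 m f) (hg : IsSymmUnimodal_s5 s g)
    (hfin : f.HasFiniteSupport) {k l : ℤ} (hkl : k ≤ l) (hms : k + l ≤ m + s) :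
    intConv f g k ≤ intConv f g l := by
  have g_reflect (i : ℤ) : g (k - i) = g (l - (k + l - s - i)) := by
    rw [← hg.apply_sub]
    congr 1
    ring
  have f_le {i j : ℤ} (hij : i + j = k + l - s) (h : i ≤ j) : f i ≤ f j :=
    hf.apply_le_apply h (by lia)
  have g_le {i j : ℤ} (hij : i + j = k + l - s) (h : i ≤ j) : g (l - i) ≤ g (l - j) := by
    rw [← hg.apply_sub]
    exact hg.apply_le_apply (by lia) (by lia)
  have monovaryOn_pair (i : ℤ) : MonovaryOn f (fun i => g (l - i)) {i, k + l - s - i} := by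
    apply MonotoneOn.monovaryOn
    · rintro x (rfl | rfl) y (rfl | rfl) hxy
      exacts [le_rfl, f_le (by ring) hxy, f_le (by ring) hxy, le_rfl]
    · rintro x (rfl | rfl) y (rfl | rfl) hxy
      exacts [le_rfl, g_le (by ring) hxy, g_le (by ring) hxy, le_rfl]
  calc ∑ᶠ i, f i * g (k - i)
    _ = ∑ᶠ i, f i * g (l - (k + l - s - i)) := by simp only [g_reflect]
    _ ≤ ∑ᶠ i, f i * g (l - i) :=
      finsum_mul_comp_le_finsum_mul_of_involutive (sub_sub_cancel (k + l - s)) hfin monovaryOn_pair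

protected theorem intConv (hf : IsSymmUnimodal_s5 m f) (hg : IsSymmUnimodal_s5 s g)
    (hfin : f.HasFiniteSupport) : IsSymmUnimodal_s5 (m + s) (intConv f g) where
  apply_sub := intConv_apply_sub hf.apply_sub hg.apply_sub
  monotoneOn k (hk : 2 * k ≤ m + s) l (hl : 2 * l ≤ m + s) hkl :=
    hf.intConv_le_intConv hg hfin hkl (by lia)

end IsSymmUnimodal_s5

section ZeroExtend

/-- The extension by zero of a sequence on `ℕ` to `ℤ`, so that reflections are defined
everywhere. -/
noncomputable def zeroExtend [Zero R] (a : ℕ → R) : ℤ → R :=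
  Function.extend Nat.cast a 0

theorem zeroExtend_natCast [Zero R] (a : ℕ → R) (n : ℕ) : zeroExtend a n = a n :=
  Nat.cast_injective.extend_apply a 0 n

theorem zeroExtend_of_neg [Zero R] (a : ℕ → R) {i : ℤ} (hi : i < 0) : zeroExtend a i = 0 :=
  Function.extend_apply' a (0 : ℤ → R) i fun ⟨n, hn⟩ => hi.not_ge (hn ▸ n.cast_nonneg)

theorem zeroExtend_hasFiniteSupport [Zero R] {m : ℕ} {a : ℕ → R} (ha : ∀ i, m < i → a i = 0) :
    (zeroExtend a).HasFiniteSupport := by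
  refine (Set.finite_Icc (0 : ℤ) m).subset (Function.support_subset_iff'.2 fun i hi => ?_)
  rcases lt_or_ge i 0 with hneg | hnonneg
  · exact zeroExtend_of_neg a hneg
  · lift i to ℕ using hnonneg
    rw [zeroExtend_natCast, ha i (by simpa using hi)]

theorem zeroExtend_sub [Zero R] {m : ℕ} {a : ℕ → R} (hsupp : ∀ i, m < i → a i = 0)
    (hsym : ∀ i ≤ m, a i = a (m - i)) (i : ℤ) : zeroExtend a (m - i) = zeroExtend a i := by
  rcases lt_or_ge i 0 with hneg | hnonneg
  · obtain ⟨n, hn⟩ := Int.eq_ofNat_of_zero_le (show 0 ≤ (m : ℤ) - i by lia)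
    rw [zeroExtend_of_neg a hneg, hn, zeroExtend_natCast, hsupp n (by lia)]
  · lift i to ℕ using hnonneg
    rcases le_or_gt i m with him | him
    · rw [← Nat.cast_sub him, zeroExtend_natCast, zeroExtend_natCast, ← hsym i him]
    · rw [zeroExtend_of_neg a (by lia), zeroExtend_natCast, hsupp i him]

theorem monotoneOn_zeroExtend [Zero R] [Preorder R] {m : ℕ} {a : ℕ → R} (h0 : 0 ≤ a 0)
    (hmono : ∀ i j, i ≤ j → 2 * j ≤ m → a i ≤ a j) :
    MonotoneOn (zeroExtend a) {i | 2 * i ≤ m} := by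
  intro i _ j (hj : 2 * j ≤ m) hij
  rcases lt_or_ge j 0 with hneg | hnonneg
  · rw [zeroExtend_of_neg a hneg, zeroExtend_of_neg a (hij.trans_lt hneg)]
  lift j to ℕ using hnonneg
  rw [zeroExtend_natCast]
  rcases lt_or_ge i 0 with hneg | hnonneg
  · rw [zeroExtend_of_neg a hneg]
    exact h0.trans (hmono 0 j j.zero_le (by lia))
  · lift i to ℕ using hnonneg
    rw [zeroExtend_natCast]
    exact hmono i j (by lia) (by lia)

theorem isSymmUnimodal_zeroExtend [Zero R] [Preorder R] {m : ℕ} {a : ℕ → R} (h0 : 0 ≤ a 0)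
    (hsupp : ∀ i, m < i → a i = 0) (hsym : ∀ i ≤ m, a i = a (m - i))
    (hmono : ∀ i j, i ≤ j → 2 * j ≤ m → a i ≤ a j) : IsSymmUnimodal_s5 m (zeroExtend a) :=
  ⟨zeroExtend_sub hsupp hsym, monotoneOn_zeroExtend h0 hmono⟩

theorem intConv_zeroExtend_natCast [NonUnitalNonAssocSemiring R] (a b : ℕ → R) (k : ℕ) :
    intConv (zeroExtend a) (zeroExtend b) k = ∑ i ∈ Finset.range (k + 1), a i * b (k - i) := by
  have support_subset : (fun i : ℤ => zeroExtend a i * zeroExtend b (k - i)).support ⊆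
      ((Finset.range (k + 1)).map Nat.castEmbedding : Finset ℤ) := by
    refine Function.support_subset_iff'.2 fun i hi => ?_
    rcases lt_or_ge i 0 with hneg | hnonneg
    · rw [zeroExtend_of_neg a hneg, zero_mul]
    · lift i to ℕ using hnonneg
      have hki : k < i := by simpa using hi
      rw [zeroExtend_of_neg b (by lia), mul_zero]
  rw [intConv, finsum_eq_sum_of_support_subset _ support_subset, Finset.sum_map]
  refine Finset.sum_congr rfl fun i hi => ?_
  rw [Nat.castEmbedding_apply, ← Nat.cast_sub (Finset.mem_range_succ_iff.1 hi),
    zeroExtend_natCast, zeroExtend_natCast]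

end ZeroExtend

theorem convolution_symmetric_unimodal_general [Semiring R] [LinearOrder R]
    [IsStrictOrderedRing R] [ExistsAddOfLE R] {m s : ℕ} {a b : ℕ → R}
    (ha0 : 0 ≤ a 0) (hb0 : 0 ≤ b 0)
    (haSupp : ∀ i, m < i → a i = 0) (hbSupp : ∀ j, s < j → b j = 0)
    (haSym : ∀ i ≤ m, a i = a (m - i)) (hbSym : ∀ j ≤ s, b j = b (s - j))
    (haMono : ∀ i j : ℕ, i ≤ j → 2 * j ≤ m → a i ≤ a j)
    (hbMono : ∀ i j : ℕ, i ≤ j → 2 * j ≤ s → b i ≤ b j) :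
    (∀ k ≤ m + s,
        (∑ i ∈ Finset.range (k + 1), a i * b (k - i)) =
          ∑ i ∈ Finset.range ((m + s - k) + 1), a i * b ((m + s - k) - i)) ∧
    (∀ k l : ℕ, k ≤ l → 2 * l ≤ m + s →
        (∑ i ∈ Finset.range (k + 1), a i * b (k - i)) ≤
          ∑ i ∈ Finset.range (l + 1), a i * b (l - i)) := by
  have hconv : IsSymmUnimodal_s5 (m + s) (intConv (zeroExtend a) (zeroExtend b)) :=
    (isSymmUnimodal_zeroExtend ha0 haSupp haSym haMono).intConv
      (isSymmUnimodal_zeroExtend hb0 hbSupp hbSym hbMono) (zeroExtend_hasFiniteSupport haSupp)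
  simp only [← intConv_zeroExtend_natCast]
  refine ⟨fun k hk => ?_, fun k l hkl hl => ?_⟩
  · rw [Nat.cast_sub hk, Nat.cast_add, hconv.apply_sub]
  · exact hconv.apply_le_apply (by lia) (by lia)

theorem convolution_symmetric_unimodal (m s : ℕ) (a b : ℕ → ℝ)
    (ha0 : ∀ i, 0 ≤ a i) (hb0 : ∀ j, 0 ≤ b j)
    (haSupp : ∀ i, m < i → a i = 0) (hbSupp : ∀ j, s < j → b j = 0)
    (haSym : ∀ i ≤ m, a i = a (m - i)) (hbSym : ∀ j ≤ s, b j = b (s - j))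
    (haMono : ∀ i j : ℕ, i ≤ j → 2 * j ≤ m → a i ≤ a j)
    (hbMono : ∀ i j : ℕ, i ≤ j → 2 * j ≤ s → b i ≤ b j) :
    (∀ k ≤ m + s,
        (∑ i ∈ Finset.range (k + 1), a i * b (k - i)) =
          ∑ i ∈ Finset.range ((m + s - k) + 1), a i * b ((m + s - k) - i)) ∧
    (∀ k l : ℕ, k ≤ l → 2 * l ≤ m + s →
        (∑ i ∈ Finset.range (k + 1), a i * b (k - i)) ≤
          ∑ i ∈ Finset.range (l + 1), a i * b (l - i)) :=
  convolution_symmetric_unimodal_general (ha0 0) (hb0 0) haSupp hbSupp haSym hbSym haMono hbMono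
end

section
/- Let q \ge 4 be an integer and let f(x) = (q-2)x^{q+1} - (q-1)x^q + 2x - 1. Then f has exactly two distinct positive real roots: the trivial root x = 1, and a second root r lying in (0,1) which satisfies |r - 1/2 - q/2^{q+2}| \le q^3/2^{2q}. -/
/-!
The polynomial `f` equals `(x - 1)² g(x)` with `g(x) = ∑ k < q, (k - 1) xᵏ`. The only negative
coefficient of `g` is the constant one, so `g` is strictly increasing on `[0, ∞)`; it changes sign
between `1/2` and `1`, which gives the root `r`. Both estimates of `r` come from Bernoulli's
inequality `1 + k (2x - 1) ≤ (2x)ᵏ`. Applied to `r^q` in the equation `f(r) = 0`, it gives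
`q / 2^(q+2) ≤ r - 1/2`. Applied to every term of `g`, it puts `g` above its tangent line at
`1/2`, so that `r` lies to the left of the Newton iterate of `1/2`.
-/

open Finset Set

/-- The quotient of `(q - 2) x ^ (q + 1) - (q - 1) x ^ q + 2 x - 1` by `(x - 1) ^ 2`, whose zeros
are the nontrivial roots. It is encoded as a function rather than as an element of `R[X]`. -/
def saddleQuotient {R : Type*} [CommRing R] (q : ℕ) (x : R) : R :=
  ∑ k ∈ range q, ((k : R) - 1) * x ^ k

section CommRing

variable {R : Type*} [CommRing R]

theorem saddleQuotient_succ (q : ℕ) (x : R) :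
    saddleQuotient (q + 1) x = saddleQuotient q x + ((q : R) - 1) * x ^ q :=
  sum_range_succ _ q

theorem saddle_eq_sq_mul_saddleQuotient (q : ℕ) (x : R) :
    ((q : R) - 2) * x ^ (q + 1) - ((q : R) - 1) * x ^ q + 2 * x - 1 =
      (x - 1) ^ 2 * saddleQuotient q x := by
  induction q with
  | zero => simp [saddleQuotient]
  | succ n ih =>
    rw [saddleQuotient_succ, mul_add, ← ih]
    push_cast
    ring

theorem saddle_eq_zero_iff [NoZeroDivisors R] {q : ℕ} {x : R} :
    ((q : R) - 2) * x ^ (q + 1) - ((q : R) - 1) * x ^ q + 2 * x - 1 = 0 ↔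
      x = 1 ∨ saddleQuotient q x = 0 := by
  rw [saddle_eq_sq_mul_saddleQuotient, mul_eq_zero, sq_eq_zero_iff, sub_eq_zero]

theorem two_mul_saddleQuotient_one (q : ℕ) :
    2 * saddleQuotient q (1 : R) = q * ((q : R) - 3) := by
  induction q with
  | zero => simp [saddleQuotient]
  | succ n ih =>
    rw [saddleQuotient_succ, mul_add, ih]
    push_cast
    ring

theorem saddleQuotient_strictMonoOn [LinearOrder R] [IsStrictOrderedRing R] {q : ℕ} (hq : 3 ≤ q) :
    StrictMonoOn (saddleQuotient q : R → R) (Ici 0) := by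
  intro a (ha : 0 ≤ a) b _ hab
  refine sum_lt_sum (fun k _ => ?_) ⟨2, mem_range.2 hq, ?_⟩
  · rcases k.eq_zero_or_pos with rfl | hk
    · simp
    · have hcoeff : 0 ≤ (k : R) - 1 := sub_nonneg.2 (by exact_mod_cast hk)
      exact mul_le_mul_of_nonneg_left (pow_le_pow_left₀ ha hab.le k) hcoeff
  · exact mul_lt_mul_of_pos_left (pow_lt_pow_left₀ hab ha two_ne_zero) (by norm_num)

end CommRing

section Field

variable {K : Type*} [Field K] [NeZero (2 : K)]

theorem saddleQuotient_half (q : ℕ) : saddleQuotient q (1 / 2 : K) = -(2 * q) / 2 ^ q := by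
  induction q with
  | zero => simp [saddleQuotient]
  | succ n ih =>
    rw [saddleQuotient_succ, ih, one_div_pow]
    push_cast
    field_simp
    ring

theorem sum_range_sub_one_mul_self_div_two_pow (q : ℕ) :
    ∑ k ∈ range q, ((k : K) - 1) * k / 2 ^ k = 4 - 2 * ((q : K) ^ 2 + q + 2) / 2 ^ q := by
  induction q with
  | zero => norm_num
  | succ n ih =>
    rw [sum_range_succ, ih]
    push_cast
    field_simp
    ring

end Field

section OrderedField

variable {K : Type*} [Field K] [LinearOrder K] [IsStrictOrderedRing K]

theorem one_add_mul_div_two_pow_le_pow {x : K} (hx : -(1 / 2) ≤ x) (k : ℕ) :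
    (1 + k * (2 * x - 1)) / 2 ^ k ≤ x ^ k := by
  rw [div_le_iff₀' (by positivity), ← mul_pow]
  exact one_add_mul_sub_le_pow (by linarith) k

theorem tangent_half_le_saddleQuotient (q : ℕ) {x : K} (hx : -(1 / 2) ≤ x) :
    -(2 * q) / 2 ^ q + (4 - 2 * ((q : K) ^ 2 + q + 2) / 2 ^ q) * (2 * x - 1) ≤
      saddleQuotient q x := by
  calc -(2 * q) / 2 ^ q + (4 - 2 * ((q : K) ^ 2 + q + 2) / 2 ^ q) * (2 * x - 1)
      = ∑ k ∈ range q, ((k : K) - 1) * ((1 + k * (2 * x - 1)) / 2 ^ k) := by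
        rw [← saddleQuotient_half, ← sum_range_sub_one_mul_self_div_two_pow, saddleQuotient,
          sum_mul, ← sum_add_distrib]
        refine sum_congr rfl fun k _ => ?_
        rw [one_div_pow]
        ring
    _ ≤ saddleQuotient q x := by
        refine sum_le_sum fun k _ => ?_
        rcases k.eq_zero_or_pos with rfl | hk
        · simp
        · have hcoeff : 0 ≤ (k : K) - 1 := sub_nonneg.2 (by exact_mod_cast hk)
          exact mul_le_mul_of_nonneg_left (one_add_mul_div_two_pow_le_pow hx k) hcoeff

theorem newton_bound_of_saddleQuotient_eq_zero {q : ℕ} {r : K} (hr : -(1 / 2) ≤ r)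
    (hroot : saddleQuotient q r = 0) :
    (2 * 2 ^ q - ((q : K) ^ 2 + q + 2)) * (2 * r - 1) ≤ q := by
  have htangent := tangent_half_le_saddleQuotient q hr
  rw [hroot] at htangent
  field_simp at htangent
  linarith

theorem two_mul_sq_add_self_add_two_le_three_mul_two_pow {q : ℕ} (hq : 4 ≤ q) :
    2 * (q ^ 2 + q + 2) ≤ 3 * 2 ^ q := by
  induction q, hq using Nat.le_induction with
  | base => norm_num
  | succ n hn ih =>
    rw [pow_succ 2 n]
    nlinarith

theorem sub_half_sub_le_of_saddleQuotient_eq_zero {q : ℕ} (hq : 4 ≤ q) {r : K} (hr : 1 / 2 ≤ r)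
    (hroot : saddleQuotient q r = 0) :
    r - 1 / 2 - q / 2 ^ (q + 2) ≤ (q : K) ^ 3 / 2 ^ (2 * q) := by
  have hq' : (4 : K) ≤ q := by exact_mod_cast hq
  have hgrowth : 2 * ((q : K) ^ 2 + q + 2) ≤ 3 * 2 ^ q := by
    exact_mod_cast two_mul_sq_add_self_add_two_le_three_mul_two_pow hq
  have hnewton := newton_bound_of_saddleQuotient_eq_zero (by linarith) hroot
  obtain ⟨t, rfl⟩ : ∃ t, r = (1 + t) / 2 := ⟨2 * r - 1, by ring⟩
  rw [show 2 * ((1 + t) / 2) - 1 = t by ring] at hnewton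
  have ht : 0 ≤ t := by linarith
  have hcrude : 2 ^ q * t ≤ 2 * q := by
    calc 2 ^ q * t ≤ 2 * (2 * 2 ^ q - ((q : K) ^ 2 + q + 2)) * t := by gcongr; linarith
      _ ≤ 2 * q := by linarith
  have hquad : (q : K) ^ 2 + q + 2 ≤ 2 * q ^ 2 := by nlinarith
  have hbound : 2 ^ q * (2 * 2 ^ q * t) ≤ 2 ^ q * q + 4 * (q : K) ^ 3 := by
    calc 2 ^ q * (2 * 2 ^ q * t)
        ≤ 2 ^ q * (q + ((q : K) ^ 2 + q + 2) * t) := by gcongr; linarith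
      _ = 2 ^ q * q + ((q : K) ^ 2 + q + 2) * (2 ^ q * t) := by ring
      _ ≤ 2 ^ q * q + 2 * q ^ 2 * (2 * q) := by gcongr
      _ = 2 ^ q * q + 4 * (q : K) ^ 3 := by ring
  rw [pow_add, mul_comm 2 q, pow_mul]
  field_simp
  linarith

theorem le_sub_half_of_saddleQuotient_eq_zero {q : ℕ} {r : K} (hr : 1 / 2 ≤ r) (hr1 : r ≤ 1)
    (hroot : saddleQuotient q r = 0) :
    (q : K) / 2 ^ (q + 2) ≤ r - 1 / 2 := by
  have hsaddle := saddle_eq_zero_iff.2 (Or.inr hroot)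
  obtain ⟨t, rfl⟩ : ∃ t, r = (1 + t) / 2 := ⟨2 * r - 1, by ring⟩
  have ht0 : 0 ≤ t := by linarith
  have ht1 : 0 ≤ 1 - t := by linarith
  have hfactor : 0 ≤ q * (1 - t) + 2 * t := by positivity
  have hbernoulli : 1 + q * t ≤ (1 + t) ^ q := one_add_mul_le_pow (by linarith) q
  have hsurplus : 0 ≤ t * ((1 - t) * ((q : K) ^ 2 - q + 2) + t * (q + 2)) := by
    have hquad : 0 ≤ (q : K) ^ 2 - q + 2 := by nlinarith [sq_nonneg ((q : K) - 1)]
    positivity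
  have hbound : (q : K) ≤ 2 * t * 2 ^ q := by
    calc (q : K) ≤ (1 + q * t) * (q * (1 - t) + 2 * t) := by linarith
      _ ≤ (1 + t) ^ q * (q * (1 - t) + 2 * t) := by gcongr
      _ = 2 * t * 2 ^ q := by
        rw [pow_succ, div_pow] at hsaddle
        field_simp at hsaddle
        linear_combination -hsaddle
  rw [pow_add]
  field_simp
  linarith

end OrderedField

theorem exists_saddleQuotient_eq_zero {q : ℕ} (hq : 4 ≤ q) :
    ∃ r ∈ Ioo (1 / 2 : ℝ) 1, saddleQuotient q r = 0 := by
  have hq' : (4 : ℝ) ≤ q := by exact_mod_cast hq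
  have hcont : Continuous (saddleQuotient q : ℝ → ℝ) := by
    unfold saddleQuotient
    fun_prop
  have hneg : saddleQuotient q (1 / 2 : ℝ) < 0 := by
    rw [saddleQuotient_half]
    exact div_neg_of_neg_of_pos (by linarith) (by positivity)
  have hpos : 0 < saddleQuotient q (1 : ℝ) := by
    nlinarith [two_mul_saddleQuotient_one (R := ℝ) q]
  exact intermediate_value_Ioo (by norm_num) hcont.continuousOn ⟨hneg, hpos⟩

theorem saddle_polynomial_roots (q : ℕ) (hq : 4 ≤ q) :
    ∃ r : ℝ, 0 < r ∧ r < 1 ∧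
      ((q : ℝ) - 2) * r ^ (q + 1) - ((q : ℝ) - 1) * r ^ q + 2 * r - 1 = 0 ∧
      |r - 1 / 2 - (q : ℝ) / 2 ^ (q + 2)| ≤ (q : ℝ) ^ 3 / 2 ^ (2 * q) ∧
      (((q : ℝ) - 2) * 1 ^ (q + 1) - ((q : ℝ) - 1) * 1 ^ q + 2 * 1 - 1 = 0) ∧
      ∀ x : ℝ, 0 < x →
        ((q : ℝ) - 2) * x ^ (q + 1) - ((q : ℝ) - 1) * x ^ q + 2 * x - 1 = 0 →
        x = 1 ∨ x = r := by
  obtain ⟨r, ⟨hr, hr1⟩, hroot⟩ := exists_saddleQuotient_eq_zero hq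
  have hr0 : 0 < r := by linarith
  have hlower := le_sub_half_of_saddleQuotient_eq_zero hr.le hr1.le hroot
  have hupper := sub_half_sub_le_of_saddleQuotient_eq_zero hq hr.le hroot
  refine ⟨r, hr0, hr1, saddle_eq_zero_iff.2 (Or.inr hroot), ?_,
    saddle_eq_zero_iff.2 (Or.inl rfl), fun x hx h => (saddle_eq_zero_iff.1 h).imp_right ?_⟩
  · rwa [abs_of_nonneg (sub_nonneg.2 hlower)]
  · intro hxroot
    exact (saddleQuotient_strictMonoOn (by lia)).injOn hx.le hr0.le (hxroot.trans hroot.symm)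
end

section
/- Let q \ge 4 be an integer, let r be the unique real number in (0,1) satisfying (q-2)r^{q+1} - (q-1)r^q + 2r - 1 = 0, and set \varphi(r) = ( r/(1-r)^2 - q^2 r^q/(1-r^q)^2 )^{-1/2}. Then C(n,q,n) \sim (\varphi(r)/\sqrt{2\pi n}) \cdot ((1-r^q)/(r-r^2))^n as n \to \infty; that is, the limit as n \to \infty of C(n,q,n) \cdot \sqrt{2\pi n} \cdot ((r-r^2)/(1-r^q))^n / \varphi(r) equals 1. -/
open Filter

/-! Write `P(x) = 1 + x + ⋯ + x^(q-1)`. For `r > 0` the number `C(n,q,n) r^n / P(r)^n` is the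
probability that `n` independent variables, each equal to `j < q` with probability `r^j / P(r)`,
add up to `n`. The equation for `r` says that these variables have mean `1`, so a local central
limit theorem gives the asymptotics `1 / √(2πnσ²)`, where `σ²` is their variance. As for any
exponentially tilted distribution, the mean is `r P'(r) / P(r)` and the variance is
`r d/dr` of the mean; with `P(x) = (1 - x^q) / (1 - x)` this gives `σ² = φ(r)⁻²`.

For the local limit theorem, Cauchy's formula on the circle of radius `r` writes the probability as
`(2π)⁻¹ ∫ f(t)^n dt` over `[-π, π]`, with `f` the characteristic function of the centred variables.
After the substitution `t = u / √n` the integrand tends to `exp (-σ² u² / 2)`. It is dominated by a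
Gaussian, because already two adjacent atoms of the distribution force
`‖f t‖ ≤ 1 - p (1 - cos t) ≤ exp (-2 p t² / π²)` on `[-π, π]` for some `p > 0`.
-/

section Laplace

open scoped Topology Real

theorem tendsto_pow_of_isLittleO_sub_quadratic {f : ℝ → ℂ} {V : ℝ}
    (hf : (fun t : ℝ ↦ f t - (1 - V / 2 * t ^ 2)) =o[𝓝 0] fun t : ℝ ↦ t ^ 2) (u : ℝ) :
    Tendsto (fun n : ℕ ↦ f (u / √n) ^ n) atTop (𝓝 (Real.exp (-(V / 2) * u ^ 2) : ℂ)) := by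
  have hzero : Tendsto (fun n : ℕ ↦ u / √n) atTop (𝓝 0) :=
    tendsto_const_nhds.div_atTop (Real.tendsto_sqrt_atTop.comp tendsto_natCast_atTop_atTop)
  have hsq (n : ℕ) : (u / √n) ^ 2 = u ^ 2 / n := by
    rw [div_pow, Real.sq_sqrt n.cast_nonneg]
  have hbig : (fun n : ℕ ↦ (u / √n) ^ 2) =O[atTop] fun n : ℕ ↦ 1 / (n : ℂ) :=
    .of_bound (u ^ 2) (.of_forall fun n ↦ by rw [hsq]; simp [div_eq_mul_inv])
  rw [Complex.ofReal_exp]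
  refine Complex.tendsto_pow_exp_of_isLittleO_sub_add_div _
    (((hf.comp_tendsto hzero).trans_isBigO hbig).congr_left fun n ↦ ?_)
  have hsq' : ((u / √n : ℝ) : ℂ) ^ 2 = u ^ 2 / n := mod_cast hsq n
  simp only [Function.comp_apply, hsq']
  push_cast
  ring

theorem mul_intervalIntegral_eq_integral_indicator_comp_div (g : ℝ → ℂ) {a s : ℝ} (ha : 0 ≤ a)
    (hs : 0 < s) :
    s * ∫ t in -a..a, g t =
      ∫ u, (Set.Ioc (-(s * a)) (s * a)).indicator (fun u ↦ g (u / s)) u := by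
  rw [MeasureTheory.integral_indicator measurableSet_Ioc,
    ← intervalIntegral.integral_of_le (neg_le_self (by positivity)),
    intervalIntegral.integral_comp_div g hs.ne', Complex.real_smul, neg_div,
    mul_div_cancel_left₀ a hs.ne']

theorem norm_pow_comp_div_sqrt_le {f : ℝ → ℂ} {a c : ℝ}
    (hbound : ∀ t, |t| ≤ a → ‖f t‖ ≤ Real.exp (-c * t ^ 2)) {n : ℕ} (hn : 0 < n) {u : ℝ}
    (hu : |u| ≤ √n * a) :
    ‖f (u / √n) ^ n‖ ≤ Real.exp (-c * u ^ 2) := by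
  have hs : 0 < √(n : ℝ) := Real.sqrt_pos.2 (mod_cast hn)
  have hut : |u / √n| ≤ a := by rwa [abs_div, abs_of_pos hs, div_le_iff₀' hs]
  calc ‖f (u / √n) ^ n‖ = ‖f (u / √n)‖ ^ n := norm_pow _ _
    _ ≤ Real.exp (-c * (u / √n) ^ 2) ^ n := by gcongr; exact hbound _ hut
    _ = Real.exp (-c * u ^ 2) := by
      rw [← Real.exp_nat_mul, div_pow, Real.sq_sqrt n.cast_nonneg]
      field_simp

theorem tendsto_sqrt_mul_integral_pow {f : ℝ → ℂ} (hf : Continuous f) {a c V : ℝ} (ha : 0 < a)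
    (hc : 0 < c) (hbound : ∀ t, |t| ≤ a → ‖f t‖ ≤ Real.exp (-c * t ^ 2))
    (hquad : (fun t : ℝ ↦ f t - (1 - V / 2 * t ^ 2)) =o[𝓝 0] fun t : ℝ ↦ t ^ 2) :
    Tendsto (fun n : ℕ ↦ (√n : ℂ) * ∫ t in -a..a, f t ^ n) atTop (𝓝 (√(2 * π / V) : ℂ)) := by
  have hgauss : ∫ u : ℝ, (Real.exp (-(V / 2) * u ^ 2) : ℂ) = (√(2 * π / V) : ℂ) := by
    rw [integral_complex_ofReal, integral_gaussian, div_div_eq_mul_div, mul_comm]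
  have hrescaled : Tendsto (fun n : ℕ ↦ ∫ u,
      (Set.Ioc (-(√n * a)) (√n * a)).indicator (fun u ↦ f (u / √n) ^ n) u) atTop
      (𝓝 (∫ u : ℝ, (Real.exp (-(V / 2) * u ^ 2) : ℂ))) := by
    refine MeasureTheory.tendsto_integral_filter_of_dominated_convergence
      (fun u ↦ Real.exp (-c * u ^ 2)) (.of_forall fun n ↦ ?_) ?_ (integrable_exp_neg_mul_sq hc)
      (.of_forall fun u ↦ ?_)
    · exact (by fun_prop : Continuous fun u ↦ f (u / √n) ^ n).aestronglyMeasurable.indicator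
        measurableSet_Ioc
    · filter_upwards [eventually_gt_atTop 0] with n hn
      refine .of_forall fun u ↦ ?_
      by_cases hu : u ∈ Set.Ioc (-(√n * a)) (√n * a)
      · rw [Set.indicator_of_mem hu]
        exact norm_pow_comp_div_sqrt_le hbound hn (abs_le.2 ⟨hu.1.le, hu.2⟩)
      · rw [Set.indicator_of_notMem hu, norm_zero]
        positivity
    · have hlarge : ∀ᶠ n : ℕ in atTop, |u| < √n * a :=
        ((Real.tendsto_sqrt_atTop.comp tendsto_natCast_atTop_atTop).atTop_mul_const
          ha).eventually_gt_atTop |u|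
      refine (tendsto_pow_of_isLittleO_sub_quadratic hquad u).congr' ?_
      filter_upwards [hlarge] with n hn
      have hu : u ∈ Set.Ioc (-(√n * a)) (√n * a) := ⟨(abs_lt.1 hn).1, (abs_lt.1 hn).2.le⟩
      rw [Set.indicator_of_mem hu]
  rw [← hgauss]
  refine hrescaled.congr' ?_
  filter_upwards [eventually_gt_atTop 0] with n hn
  exact (mul_intervalIntegral_eq_integral_indicator_comp_div (fun t ↦ f t ^ n) ha.le
    (Real.sqrt_pos.2 (mod_cast hn))).symm

end Laplace

section WeightedCharFun

open scoped Topology Real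
open Complex (I)

variable {ι : Type*} {s : Finset ι} {w x : ι → ℝ}

/-- The characteristic function of the finitely supported measure `∑ i ∈ s, w i • δ (x i)` on
`ℝ`. -/
noncomputable def weightedCharFun (s : Finset ι) (w x : ι → ℝ) (t : ℝ) : ℂ :=
  ∑ i ∈ s, (w i : ℂ) * Complex.exp (x i * t * I)

theorem continuous_weightedCharFun : Continuous (weightedCharFun s w x) := by
  unfold weightedCharFun
  fun_prop

theorem isLittleO_cexp_mul_I_sub_quadratic (a : ℝ) :
    (fun t : ℝ ↦ Complex.exp (a * t * I) - (1 + a * I * t - a ^ 2 / 2 * t ^ 2)) =o[𝓝 0]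
      fun t : ℝ ↦ t ^ 2 := by
  have hzero : Tendsto (fun t : ℝ ↦ (a * t * I : ℂ)) (𝓝 0) (𝓝 0) :=
    Continuous.tendsto' (by fun_prop) 0 0 (by simp)
  have hbig : (fun t : ℝ ↦ (a * t * I : ℂ) ^ 2) =O[𝓝 0] fun t : ℝ ↦ t ^ 2 :=
    .of_bound (a ^ 2) (.of_forall fun t ↦ by simp [mul_pow])
  refine (((Complex.exp_sub_sum_range_succ_isLittleO_pow 2).comp_tendsto hzero).trans_isBigO
    hbig).congr_left fun t ↦ ?_
  simp only [Function.comp_apply, Finset.sum_range_succ, Finset.sum_range_zero, Nat.factorial,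
    mul_pow, Complex.I_sq]
  push_cast
  ring

theorem isLittleO_weightedCharFun_sub_quadratic {V : ℝ} (hsum : ∑ i ∈ s, w i = 1)
    (hmean : ∑ i ∈ s, w i * x i = 0) (hvar : ∑ i ∈ s, w i * x i ^ 2 = V) :
    (fun t : ℝ ↦ weightedCharFun s w x t - (1 - V / 2 * t ^ 2)) =o[𝓝 0] fun t : ℝ ↦ t ^ 2 := by
  have hsum' : ∑ i ∈ s, (w i : ℂ) = 1 := mod_cast hsum
  have hmean' : ∑ i ∈ s, (w i * x i : ℂ) = 0 := mod_cast hmean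
  have hvar' : ∑ i ∈ s, (w i * x i ^ 2 : ℂ) = V := mod_cast hvar
  refine (Asymptotics.IsLittleO.sum fun i (_ : i ∈ s) ↦
    (isLittleO_cexp_mul_I_sub_quadratic (x i)).const_mul_left (w i : ℂ)).congr_left fun t ↦ ?_
  rw [Finset.sum_apply]
  calc ∑ i ∈ s, (w i : ℂ) * (Complex.exp (x i * t * I) - (1 + x i * I * t - x i ^ 2 / 2 * t ^ 2))
      = ∑ i ∈ s, ((w i : ℂ) * Complex.exp (x i * t * I) - (w i + (w i * x i) * (I * t)
          - (w i * x i ^ 2) * (t ^ 2 / 2))) := Finset.sum_congr rfl fun i _ ↦ by ring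
    _ = weightedCharFun s w x t - (1 - V / 2 * t ^ 2) := by
      rw [Finset.sum_sub_distrib, Finset.sum_sub_distrib, Finset.sum_add_distrib,
        ← Finset.sum_mul, ← Finset.sum_mul, hsum', hmean', hvar', weightedCharFun]
      ring

theorem norm_add_mul_cexp_le {a b : ℝ} (ha : 0 < a) (hb : 0 < b) (θ : ℝ) :
    ‖(a : ℂ) + b * Complex.exp (θ * I)‖ ≤ a + b - a * b / (a + b) * (1 - Real.cos θ) := by
  set p := a * b / (a + b)
  have hp : 0 < p := by positivity
  have hpab : p * (a + b) = a * b := div_mul_cancel₀ _ (by positivity)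
  have hnormSq : ‖(a : ℂ) + b * Complex.exp (θ * I)‖ ^ 2 =
      (a + b) ^ 2 - 2 * (a * b) * (1 - Real.cos θ) := by
    rw [← Complex.normSq_eq_norm_sq, Complex.normSq_apply, Complex.exp_mul_I]
    simp only [← Complex.ofReal_cos, ← Complex.ofReal_sin, Complex.add_re, Complex.add_im,
      Complex.re_ofReal_mul, Complex.im_ofReal_mul, Complex.ofReal_re, Complex.ofReal_im,
      Complex.mul_I_re, Complex.mul_I_im]
    linear_combination b ^ 2 * Real.sin_sq_add_cos_sq θ
  have hrhs : 0 ≤ a + b - p * (1 - Real.cos θ) := by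
    have hpa : p * 2 ≤ a + b := by
      rw [div_mul_eq_mul_div, div_le_iff₀ (by positivity)]
      nlinarith [sq_nonneg (a - b), mul_pos ha hb]
    nlinarith [Real.neg_one_le_cos θ]
  refine le_of_sq_le_sq ?_ hrhs
  calc ‖(a : ℂ) + b * Complex.exp (θ * I)‖ ^ 2
      = (a + b) ^ 2 - 2 * (p * (a + b)) * (1 - Real.cos θ) := by rw [hnormSq, hpab]
    _ ≤ (a + b - p * (1 - Real.cos θ)) ^ 2 := by
      linarith [sq_nonneg (p * (1 - Real.cos θ))]

theorem norm_weightedCharFun_le (hw : ∀ i ∈ s, 0 ≤ w i) (t : ℝ) :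
    ‖weightedCharFun s w x t‖ ≤ ∑ i ∈ s, w i := by
  refine norm_sum_le_of_le s fun i hi ↦ ?_
  rw [norm_mul, ← Complex.ofReal_mul, Complex.norm_exp_ofReal_mul_I, mul_one,
    Complex.norm_of_nonneg (hw i hi)]

theorem norm_weightedCharFun_le_sub_cos (hw : ∀ i ∈ s, 0 ≤ w i)
    {i j : ι} (hi : i ∈ s) (hj : j ∈ s) (hij : i ≠ j) (hwi : 0 < w i) (hwj : 0 < w j) (t : ℝ) :
    ‖weightedCharFun s w x t‖ ≤
      ∑ l ∈ s, w l - w i * w j / (w i + w j) * (1 - Real.cos ((x j - x i) * t)) := by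
  classical
  have hj' : j ∈ s.erase i := Finset.mem_erase.2 ⟨hij.symm, hj⟩
  have hpair : ‖(w i : ℂ) * Complex.exp (x i * t * I) + w j * Complex.exp (x j * t * I)‖ ≤
      w i + w j - w i * w j / (w i + w j) * (1 - Real.cos ((x j - x i) * t)) := by
    have hfactor : (w i : ℂ) * Complex.exp (x i * t * I) + w j * Complex.exp (x j * t * I) =
        Complex.exp ((x i * t : ℝ) * I) *
          (w i + w j * Complex.exp (((x j - x i) * t : ℝ) * I)) := by
      rw [mul_add, mul_left_comm, ← Complex.exp_add]
      push_cast
      ring_nf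
    rw [hfactor, norm_mul, Complex.norm_exp_ofReal_mul_I, one_mul]
    exact norm_add_mul_cexp_le hwi hwj _
  have hrest := norm_weightedCharFun_le (s := (s.erase i).erase j) (x := x)
    (fun l hl ↦ hw l (Finset.mem_of_mem_erase (Finset.mem_of_mem_erase hl))) t
  rw [weightedCharFun] at hrest ⊢
  rw [← Finset.add_sum_erase s _ hi, ← Finset.add_sum_erase _ _ hj', ← add_assoc,
    ← Finset.add_sum_erase s w hi, ← Finset.add_sum_erase _ w hj']
  linarith [norm_add_le_of_le hpair hrest]

theorem norm_weightedCharFun_le_exp_neg_mul_sq (hw : ∀ i ∈ s, 0 ≤ w i) (hsum : ∑ i ∈ s, w i = 1)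
    {i j : ι} (hi : i ∈ s) (hj : j ∈ s) (hwi : 0 < w i) (hwj : 0 < w j) (hij : x j = x i + 1)
    {t : ℝ} (ht : |t| ≤ π) :
    ‖weightedCharFun s w x t‖ ≤
      Real.exp (-(w i * w j / (w i + w j) * (2 / π ^ 2)) * t ^ 2) := by
  have hne : i ≠ j := by
    rintro rfl
    linarith
  have hdiff : x j - x i = 1 := by linarith
  calc ‖weightedCharFun s w x t‖
      ≤ 1 - w i * w j / (w i + w j) * (1 - Real.cos t) := by
        simpa only [hsum, hdiff, one_mul] using
          norm_weightedCharFun_le_sub_cos (x := x) hw hi hj hne hwi hwj t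
    _ ≤ 1 - w i * w j / (w i + w j) * (2 / π ^ 2 * t ^ 2) := by
        gcongr
        linarith [Real.cos_le_one_sub_mul_cos_sq ht]
    _ ≤ Real.exp (-(w i * w j / (w i + w j) * (2 / π ^ 2)) * t ^ 2) := by
        linarith [Real.add_one_le_exp (-(w i * w j / (w i + w j) * (2 / π ^ 2)) * t ^ 2)]

theorem tendsto_sqrt_mul_integral_weightedCharFun_pow {V : ℝ} (hw : ∀ i ∈ s, 0 ≤ w i)
    (hsum : ∑ i ∈ s, w i = 1) (hmean : ∑ i ∈ s, w i * x i = 0)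
    (hvar : ∑ i ∈ s, w i * x i ^ 2 = V) {i j : ι} (hi : i ∈ s) (hj : j ∈ s) (hwi : 0 < w i)
    (hwj : 0 < w j) (hij : x j = x i + 1) :
    Tendsto (fun n : ℕ ↦ (√n : ℂ) * ∫ t in -π..π, weightedCharFun s w x t ^ n) atTop
      (𝓝 (√(2 * π / V) : ℂ)) :=
  tendsto_sqrt_mul_integral_pow continuous_weightedCharFun Real.pi_pos
    (by positivity : 0 < w i * w j / (w i + w j) * (2 / π ^ 2))
    (fun _ ht ↦ norm_weightedCharFun_le_exp_neg_mul_sq hw hsum hi hj hwi hwj hij ht)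
    (isLittleO_weightedCharFun_sub_quadratic hsum hmean hvar)

end WeightedCharFun

section LargePowers

open scoped Topology Real Polynomial
open Complex (I)

theorem toAddCircle_apply_coe (p : ℂ[X]) (t : ℝ) :
    p.toAddCircle (t : AddCircle (2 * π)) = p.eval (Complex.exp (t * I)) := by
  rw [Polynomial.toAddCircle, Polynomial.aeval_continuousMap_apply,
    ContinuousMap.coe_mk, AddCircle.toCircle_apply_mk, div_self Real.two_pi_pos.ne', one_mul,
    Circle.coe_exp]

theorem integral_polynomial_eval_mul_cexp (p : ℂ[X]) (r : ℂ) (n : ℕ) :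
    ∫ t in -π..π, p.eval (r * Complex.exp (t * I)) * Complex.exp (-(n * (t * I))) =
      2 * π * (p.coeff n * r ^ n) := by
  have : Fact (0 < 2 * π) := ⟨Real.two_pi_pos⟩
  have hperiod : -π + 2 * π = π := by ring
  have hfourier (t : ℝ) : fourier (-n : ℤ) (t : AddCircle (2 * π)) =
      Complex.exp (-(n * (t * I))) := by
    rw [fourier_coe_apply]
    push_cast
    field_simp
  have hcoeff := (p.comp (.C r * .X)).fourierCoeff_toAddCircle_natCast n
  rw [fourierCoeff_eq_intervalIntegral _ _ (-π), hperiod, Polynomial.comp_C_mul_X_coeff, one_div,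
    inv_smul_eq_iff₀ Real.two_pi_pos.ne', Complex.real_smul] at hcoeff
  simp only [hfourier, toAddCircle_apply_coe, Polynomial.eval_comp, Polynomial.eval_mul,
    Polynomial.eval_C, Polynomial.eval_X, smul_eq_mul] at hcoeff
  simpa only [mul_comm (Polynomial.eval _ _), Complex.ofReal_mul, Complex.ofReal_ofNat] using hcoeff

/-- The moment `∑ pⱼ xʲ jⁱ` of the coefficients `pⱼ` of `P`, that is, `(x d/dx)ⁱ P`. -/
noncomputable def powerMoment (P : ℝ[X]) (i : ℕ) (x : ℝ) : ℝ :=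
  ∑ j ∈ P.support, P.coeff j * x ^ j * (j : ℝ) ^ i

/-- The probability `pⱼ xʲ / P(x)` given to `j` by the exponential tilt at `x` of the
coefficients `pⱼ` of `P`. -/
noncomputable def tiltedWeight (P : ℝ[X]) (x : ℝ) (j : ℕ) : ℝ :=
  P.coeff j * x ^ j / P.eval x

/-- The mean of the tilted distribution `tiltedWeight P x`. -/
noncomputable def tiltedMean (P : ℝ[X]) (x : ℝ) : ℝ :=
  powerMoment P 1 x / P.eval x

/-- The variance of the tilted distribution `tiltedWeight P x`. -/
noncomputable def tiltedVariance (P : ℝ[X]) (x : ℝ) : ℝ :=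
  powerMoment P 2 x / P.eval x - tiltedMean P x ^ 2

variable {P : ℝ[X]} {x : ℝ}

theorem powerMoment_zero (P : ℝ[X]) (x : ℝ) : powerMoment P 0 x = P.eval x := by
  simp [powerMoment, Polynomial.eval_eq_sum, Polynomial.sum_def]

theorem hasDerivAt_powerMoment (P : ℝ[X]) (i : ℕ) (hx : x ≠ 0) :
    HasDerivAt (powerMoment P i) (powerMoment P (i + 1) x / x) x := by
  unfold powerMoment
  rw [Finset.sum_div]
  refine HasDerivAt.fun_sum fun j _ ↦ ?_
  convert! ((hasDerivAt_pow j x).const_mul (P.coeff j)).mul_const ((j : ℝ) ^ i) using 1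
  obtain rfl | hj := eq_or_ne j 0
  · simp
  · rw [← mul_pow_sub_one hj x]
    field_simp
    ring

theorem tiltedMean_eq_mul_logDeriv (P : ℝ[X]) (hx : x ≠ 0) :
    tiltedMean P x = x * logDeriv (fun y ↦ P.eval y) x := by
  have hderiv : HasDerivAt (fun y ↦ P.eval y) (powerMoment P 1 x / x) x :=
    (hasDerivAt_powerMoment P 0 hx).congr_of_eventuallyEq
      (.of_forall fun y ↦ (powerMoment_zero P y).symm)
  rw [tiltedMean, logDeriv_apply, hderiv.deriv]
  field_simp

theorem hasDerivAt_tiltedMean (hx : x ≠ 0) (hP : P.eval x ≠ 0) :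
    HasDerivAt (tiltedMean P) (tiltedVariance P x / x) x := by
  have hquot := (hasDerivAt_powerMoment P 1 hx).fun_div (hasDerivAt_powerMoment P 0 hx)
    (by rwa [powerMoment_zero])
  simp only [powerMoment_zero] at hquot
  refine hquot.congr_deriv ?_
  rw [tiltedVariance, tiltedMean]
  field_simp

theorem tiltedVariance_eq_mul_deriv (hx : x ≠ 0) (hP : P.eval x ≠ 0) :
    tiltedVariance P x = x * deriv (tiltedMean P) x := by
  rw [(hasDerivAt_tiltedMean hx hP).deriv, mul_div_cancel₀ _ hx]

theorem sum_tiltedWeight_mul_pow (P : ℝ[X]) (x : ℝ) (i : ℕ) :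
    ∑ j ∈ P.support, tiltedWeight P x j * (j : ℝ) ^ i = powerMoment P i x / P.eval x := by
  rw [powerMoment, Finset.sum_div]
  exact Finset.sum_congr rfl fun j _ ↦ by rw [tiltedWeight]; ring

theorem sum_tiltedWeight (hP : P.eval x ≠ 0) : ∑ j ∈ P.support, tiltedWeight P x j = 1 := by
  simpa [powerMoment_zero, hP] using sum_tiltedWeight_mul_pow P x 0

theorem sum_tiltedWeight_mul_sub_mean (hP : P.eval x ≠ 0) :
    ∑ j ∈ P.support, tiltedWeight P x j * (j - tiltedMean P x) = 0 := by
  have hmean := sum_tiltedWeight_mul_pow P x 1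
  simp only [pow_one] at hmean
  simp only [mul_sub]
  rw [Finset.sum_sub_distrib, ← Finset.sum_mul, sum_tiltedWeight hP, hmean, tiltedMean]
  ring

theorem sum_tiltedWeight_mul_sub_mean_sq (hP : P.eval x ≠ 0) :
    ∑ j ∈ P.support, tiltedWeight P x j * (j - tiltedMean P x) ^ 2 = tiltedVariance P x := by
  have hmean := sum_tiltedWeight_mul_sub_mean hP
  calc ∑ j ∈ P.support, tiltedWeight P x j * (j - tiltedMean P x) ^ 2
      = ∑ j ∈ P.support, (tiltedWeight P x j * (j : ℝ) ^ 2 - tiltedWeight P x j *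
          tiltedMean P x ^ 2 - tiltedWeight P x j * (j - tiltedMean P x) * (2 * tiltedMean P x)) :=
        Finset.sum_congr rfl fun j _ ↦ by ring
    _ = tiltedVariance P x := by
        rw [Finset.sum_sub_distrib, Finset.sum_sub_distrib, ← Finset.sum_mul, ← Finset.sum_mul,
          hmean, sum_tiltedWeight hP, sum_tiltedWeight_mul_pow, tiltedVariance]
        ring

theorem tiltedWeight_nonneg (hP : ∀ j, 0 ≤ P.coeff j) (hPx : 0 < P.eval x) (hx : 0 < x) (j : ℕ) :
    0 ≤ tiltedWeight P x j :=
  div_nonneg (mul_nonneg (hP j) (by positivity)) hPx.le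

theorem tiltedWeight_pos (hPx : 0 < P.eval x) (hx : 0 < x) {j : ℕ} (hj : 0 < P.coeff j) :
    0 < tiltedWeight P x j := by
  unfold tiltedWeight
  positivity

theorem mem_support_of_coeff_pos {j : ℕ} (hj : 0 < P.coeff j) : j ∈ P.support :=
  Polynomial.mem_support_iff.2 hj.ne'

theorem eval_pos_of_coeff_pos (hP : ∀ j, 0 ≤ P.coeff j) (hx : 0 < x) {m : ℕ}
    (hm : 0 < P.coeff m) : 0 < P.eval x := by
  rw [← powerMoment_zero]
  refine Finset.sum_pos' (fun j _ ↦ ?_) ⟨m, mem_support_of_coeff_pos hm, by positivity⟩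
  have hPj : 0 ≤ P.coeff j := hP j
  positivity

theorem tiltedVariance_pos (hP : ∀ j, 0 ≤ P.coeff j) (hx : 0 < x) {i j : ℕ} (hij : i ≠ j)
    (hi : 0 < P.coeff i) (hj : 0 < P.coeff j) : 0 < tiltedVariance P x := by
  have hPx := eval_pos_of_coeff_pos hP hx hi
  obtain ⟨l, hl, hne⟩ : ∃ l, 0 < P.coeff l ∧ (l : ℝ) - tiltedMean P x ≠ 0 := by
    by_contra! h
    exact hij (Nat.cast_injective (R := ℝ) (by linarith [h i hi, h j hj]))
  rw [← sum_tiltedWeight_mul_sub_mean_sq hPx.ne']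
  refine Finset.sum_pos' (fun k _ ↦ ?_) ⟨l, mem_support_of_coeff_pos hl, ?_⟩
  · exact mul_nonneg (tiltedWeight_nonneg hP hPx hx k) (sq_nonneg _)
  · exact mul_pos (tiltedWeight_pos hPx hx hl) (sq_pos_of_ne_zero hne)

theorem weightedCharFun_tiltedWeight (P : ℝ[X]) (x : ℝ) (k : ℕ) (t : ℝ) :
    weightedCharFun P.support (tiltedWeight P x) (fun j ↦ j - k) t =
      ((P.eval x : ℝ) : ℂ)⁻¹ * ((P.map Complex.ofRealHom).eval (x * Complex.exp (t * I)) *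
        Complex.exp (-(k * (t * I)))) := by
  rw [weightedCharFun, Polynomial.eval_map, Polynomial.eval₂_eq_sum, Polynomial.sum_def,
    Finset.sum_mul, Finset.mul_sum]
  refine Finset.sum_congr rfl fun j _ ↦ ?_
  have hexp : Complex.exp (((j - k : ℝ) : ℂ) * t * I) =
      Complex.exp (t * I) ^ j * Complex.exp (-(k * (t * I))) := by
    rw [← Complex.exp_nat_mul, ← Complex.exp_add]
    push_cast
    ring_nf
  rw [hexp, tiltedWeight, mul_pow, Complex.ofRealHom_eq_coe]
  push_cast
  ring

theorem integral_weightedCharFun_tiltedWeight_pow (P : ℝ[X]) (x : ℝ) (k n : ℕ) :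
    ∫ t in -π..π, weightedCharFun P.support (tiltedWeight P x) (fun j ↦ j - k) t ^ n =
      2 * π * ((P ^ n).coeff (k * n) * (x ^ k / P.eval x) ^ n : ℝ) := by
  have hpow (t : ℝ) : weightedCharFun P.support (tiltedWeight P x) (fun j ↦ j - k) t ^ n =
      (((P.eval x : ℝ) : ℂ) ^ n)⁻¹ *
        (((P ^ n).map Complex.ofRealHom).eval (x * Complex.exp (t * I)) *
          Complex.exp (-((k * n : ℕ) * (t * I)))) := by
    rw [weightedCharFun_tiltedWeight, mul_pow, mul_pow, inv_pow, ← Complex.exp_nat_mul,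
      Polynomial.map_pow, Polynomial.eval_pow]
    push_cast
    ring_nf
  simp_rw [hpow]
  rw [intervalIntegral.integral_const_mul, integral_polynomial_eval_mul_cexp,
    Polynomial.coeff_map, Complex.ofRealHom_eq_coe, pow_mul]
  push_cast
  ring

theorem tendsto_coeff_pow_mul_sqrt (hP : ∀ j, 0 ≤ P.coeff j) {m : ℕ} (hm : 0 < P.coeff m)
    (hm' : 0 < P.coeff (m + 1)) (hx : 0 < x) {k : ℕ} (hk : tiltedMean P x = k) :
    Tendsto (fun n : ℕ ↦ (P ^ n).coeff (k * n) * (x ^ k / P.eval x) ^ n *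
      √(2 * π * n * tiltedVariance P x)) atTop (𝓝 1) := by
  have hPx := eval_pos_of_coeff_pos hP hx hm
  have hV := tiltedVariance_pos hP hx m.lt_succ_self.ne hm hm'
  have hmean := sum_tiltedWeight_mul_sub_mean hPx.ne'
  have hvar := sum_tiltedWeight_mul_sub_mean_sq hPx.ne'
  rw [hk] at hmean hvar
  have hintegral := tendsto_sqrt_mul_integral_weightedCharFun_pow
    (fun j _ ↦ tiltedWeight_nonneg hP hPx hx j) (sum_tiltedWeight hPx.ne') hmean hvar
    (mem_support_of_coeff_pos hm) (mem_support_of_coeff_pos hm')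
    (tiltedWeight_pos hPx hx hm) (tiltedWeight_pos hPx hx hm') (by push_cast; ring)
  simp only [integral_weightedCharFun_tiltedWeight_pow] at hintegral
  have hreal : Tendsto (fun n : ℕ ↦ √n * (2 * π * ((P ^ n).coeff (k * n) *
      (x ^ k / P.eval x) ^ n))) atTop (𝓝 √(2 * π / tiltedVariance P x)) :=
    tendsto_ofReal_iff.1 (mod_cast hintegral)
  have hscale : √(2 * π / tiltedVariance P x) * √(2 * π * tiltedVariance P x) = 2 * π := by
    have hsq : 2 * π / tiltedVariance P x * (2 * π * tiltedVariance P x) = (2 * π) ^ 2 := by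
      field_simp
    rw [← Real.sqrt_mul (by positivity), hsq, Real.sqrt_sq Real.two_pi_pos.le]
  have hlim := hreal.mul_const (√(2 * π * tiltedVariance P x) / (2 * π))
  rw [← mul_div_assoc, hscale, div_self (by positivity)] at hlim
  refine hlim.congr fun n ↦ ?_
  rw [mul_right_comm (2 * π), Real.sqrt_mul (by positivity) (n : ℝ)]
  field_simp

end LargePowers

section GeometricPolynomial

open scoped Topology Polynomial

/-- The polynomial `1 + X + ⋯ + X ^ (q - 1)`, whose powers generate the polynomial
coefficients. -/
noncomputable def geomPoly (q : ℕ) : ℝ[X] :=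
  ∑ i ∈ Finset.range q, Polynomial.X ^ i

theorem coeff_geomPoly (q j : ℕ) : (geomPoly q).coeff j = if j < q then 1 else 0 := by
  simp [geomPoly, Polynomial.coeff_X_pow]

theorem coeff_geomPoly_pow (n q k : ℕ) : (geomPoly q ^ n).coeff k = polyCoeff n q k := by
  have hmap : geomPoly q ^ n =
      ((∑ i ∈ Finset.range q, Polynomial.X ^ i : ℕ[X]) ^ n).map (Nat.castRingHom ℝ) := by
    simp [geomPoly, Polynomial.map_sum]
  rw [hmap, Polynomial.coeff_map, polyCoeff, eq_natCast]

theorem eval_geomPoly (q : ℕ) {x : ℝ} (hx : x ≠ 1) :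
    (geomPoly q).eval x = (1 - x ^ q) / (1 - x) := by
  rw [geomPoly, Polynomial.eval_finsetSum, ← neg_div_neg_eq, neg_sub, neg_sub, ← geom_sum_eq hx]
  simp only [Polynomial.eval_pow, Polynomial.eval_X]

theorem hasDerivAt_one_sub_pow (q : ℕ) {x : ℝ} (hx : x ≠ 0) :
    HasDerivAt (fun y : ℝ ↦ 1 - y ^ q) (-(q * x ^ q / x)) x := by
  refine ((hasDerivAt_pow q x).const_sub 1).congr_deriv ?_
  obtain rfl | hq := eq_or_ne q 0
  · simp
  · rw [← mul_pow_sub_one hq x]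
    field_simp

variable {q : ℕ} {x : ℝ}

theorem tiltedMean_geomPoly (hq : q ≠ 0) (hx0 : 0 < x) (hx1 : x < 1) :
    tiltedMean (geomPoly q) x = x / (1 - x) - q * x ^ q / (1 - x ^ q) := by
  have hnum : 1 - x ^ q ≠ 0 := (sub_pos.2 (pow_lt_one₀ hx0.le hx1 hq)).ne'
  have hden : 1 - x ≠ 0 := (sub_pos.2 hx1).ne'
  have heval : (fun y ↦ (geomPoly q).eval y) =ᶠ[𝓝 x] fun y ↦ (1 - y ^ q) / (1 - y) := by
    filter_upwards [eventually_ne_nhds hx1.ne] with y hy using eval_geomPoly q hy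
  have hnumDeriv := hasDerivAt_one_sub_pow q hx0.ne'
  have hdenDeriv := (hasDerivAt_id' x).const_sub 1
  rw [tiltedMean_eq_mul_logDeriv _ hx0.ne', logDeriv_apply, heval.deriv_eq, heval.eq_of_nhds,
    ← logDeriv_apply, logDeriv_div x hnum hden hnumDeriv.differentiableAt
      hdenDeriv.differentiableAt, logDeriv_apply, logDeriv_apply, hnumDeriv.deriv,
    hdenDeriv.deriv]
  field_simp
  ring

theorem tiltedVariance_geomPoly (hq : q ≠ 0) (hx0 : 0 < x) (hx1 : x < 1) :
    tiltedVariance (geomPoly q) x =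
      x / (1 - x) ^ 2 - (q : ℝ) ^ 2 * x ^ q / (1 - x ^ q) ^ 2 := by
  have hnum : 1 - x ^ q ≠ 0 := (sub_pos.2 (pow_lt_one₀ hx0.le hx1 hq)).ne'
  have hden : 1 - x ≠ 0 := (sub_pos.2 hx1).ne'
  have hP : (geomPoly q).eval x ≠ 0 := eval_geomPoly q hx1.ne ▸ div_ne_zero hnum hden
  have hmean : tiltedMean (geomPoly q) =ᶠ[𝓝 x]
      fun y ↦ y / (1 - y) - q * (1 / (1 - y ^ q) - 1) := by
    filter_upwards [Ioo_mem_nhds hx0 hx1] with y ⟨hy0, hy1⟩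
    have hy : 1 - y ^ q ≠ 0 := (sub_pos.2 (pow_lt_one₀ hy0.le hy1 hq)).ne'
    rw [tiltedMean_geomPoly hq hy0 hy1]
    field_simp
    ring
  have hderiv := ((hasDerivAt_id' x).fun_div ((hasDerivAt_id' x).const_sub 1) hden).fun_sub
    ((((hasDerivAt_const x (1 : ℝ)).fun_div (hasDerivAt_one_sub_pow q hx0.ne') hnum).sub_const
      1).const_mul (q : ℝ))
  rw [tiltedVariance_eq_mul_deriv hx0.ne' hP, hmean.deriv_eq, hderiv.deriv]
  field_simp
  ring

end GeometricPolynomial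

theorem polyCoeff_central_asymptotic (q : ℕ) (hq : 4 ≤ q) (r : ℝ) (hr0 : 0 < r) (hr1 : r < 1)
    (hroot : ((q : ℝ) - 2) * r ^ (q + 1) - ((q : ℝ) - 1) * r ^ q + 2 * r - 1 = 0) :
    Tendsto
      (fun n : ℕ =>
        (polyCoeff n q n : ℝ) * Real.sqrt (2 * Real.pi * n) * ((r - r ^ 2) / (1 - r ^ q)) ^ n /
          (1 / Real.sqrt (r / (1 - r) ^ 2 - (q : ℝ) ^ 2 * r ^ q / (1 - r ^ q) ^ 2)))
      atTop (nhds 1) := by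
  have hq0 : q ≠ 0 := by omega
  have hnum : 1 - r ^ q ≠ 0 := (sub_pos.2 (pow_lt_one₀ hr0.le hr1 hq0)).ne'
  have hden : 1 - r ≠ 0 := (sub_pos.2 hr1).ne'
  have hmean : tiltedMean (geomPoly q) r = (1 : ℕ) := by
    rw [tiltedMean_geomPoly hq0 hr0 hr1, Nat.cast_one]
    field_simp
    linear_combination hroot
  have hratio : r ^ 1 / (geomPoly q).eval r = (r - r ^ 2) / (1 - r ^ q) := by
    rw [eval_geomPoly q hr1.ne]
    field_simp
  have hcoeff (j : ℕ) (hj : j < q) : 0 < (geomPoly q).coeff j := by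
    rw [coeff_geomPoly, if_pos hj]
    exact one_pos
  have hlim := tendsto_coeff_pow_mul_sqrt (fun j ↦ by rw [coeff_geomPoly]; positivity)
    (hcoeff 0 (by omega)) (hcoeff 1 (by omega)) hr0 hmean
  refine hlim.congr fun n ↦ ?_
  rw [hratio, one_mul, coeff_geomPoly_pow, tiltedVariance_geomPoly hq0 hr0 hr1,
    Real.sqrt_mul (by positivity), div_div_eq_mul_div, div_one]
  ring
end

section
/- For every real number t with 0 < t \le 1/2, one has e^{-2t} + e^{-t/2} < 2 e^{-t}. In particular, for every integer i \le -1, e^{-2^{i+1}} + e^{-2^{i-1}} < 2 e^{-2^i}. -/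
/-!
With `y = exp (-t / 2)` the inequality becomes `y ^ 4 + y < 2 * y ^ 2`, and
`2 * y ^ 2 - (y ^ 4 + y) = y * (y + φ) * (y - φ⁻¹) * (1 - y)`, where `φ` is the golden ratio. For
`y > 0` the inequality therefore holds exactly when `φ⁻¹ < y < 1`, that is, when
`0 < t < 2 * log φ`. Since `1 / 2 < 2 * log φ < 1`, this range contains `(0, 1 / 2]`, and it
contains the power `2 ^ i` exactly when `i ≤ -1`.
-/

open Real goldenRatio

theorem pow_four_add_self_lt_two_mul_sq_iff {y : ℝ} (hy : 0 < y) :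
    y ^ 4 + y < 2 * y ^ 2 ↔ φ⁻¹ < y ∧ y < 1 := by
  have factorization : 2 * y ^ 2 - (y ^ 4 + y) = y * (y + φ) * ((y - φ⁻¹) * (1 - y)) := by
    rw [inv_goldenRatio]
    linear_combination
      (y ^ 3 - y ^ 2) * goldenRatio_add_goldenConj + (y ^ 2 - y) * goldenRatio_mul_goldenConj
  have cofactor_pos : 0 < y * (y + φ) := mul_pos hy (add_pos hy goldenRatio_pos)
  have inv_lt_one : φ⁻¹ < 1 := inv_lt_one_of_one_lt₀ one_lt_goldenRatio
  rw [← sub_pos, factorization, mul_pos_iff_of_pos_left cofactor_pos, mul_pos_iff]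
  grind

theorem exp_neg_two_mul_add_exp_neg_half_lt_iff {t : ℝ} :
    exp (-2 * t) + exp (-t / 2) < 2 * exp (-t) ↔ 0 < t ∧ t < 2 * log φ := by
  have exp_eq_pow_four : exp (-2 * t) = exp (-t / 2) ^ 4 := by
    rw [← exp_nat_mul]; ring_nf
  have exp_eq_sq : exp (-t) = exp (-t / 2) ^ 2 := by
    rw [← exp_nat_mul]; ring_nf
  rw [exp_eq_pow_four, exp_eq_sq, pow_four_add_self_lt_two_mul_sq_iff (exp_pos _),
    ← log_lt_iff_lt_exp (inv_pos.mpr goldenRatio_pos), log_inv, exp_lt_one_iff]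
  grind

theorem half_lt_two_mul_log_goldenRatio : 1 / 2 < 2 * log φ := by
  have inv_lt : φ⁻¹ < 3 / 4 := by
    rw [inv_goldenRatio]
    nlinarith [goldenConj_neg, goldenConj_sq]
  linarith [one_sub_inv_le_log_of_pos goldenRatio_pos]

theorem two_mul_log_goldenRatio_lt_one : 2 * log φ < 1 := by
  have sq_lt_exp_one : φ ^ 2 < exp 1 := by
    rw [goldenRatio_sq]
    nlinarith [goldenRatio_sq, goldenRatio_pos, exp_one_gt_d9]
  rw [← log_lt_iff_lt_exp (pow_pos goldenRatio_pos 2), log_pow] at sq_lt_exp_one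
  exact_mod_cast sq_lt_exp_one

theorem two_zpow_lt_two_mul_log_goldenRatio_iff {i : ℤ} : (2 : ℝ) ^ i < 2 * log φ ↔ i ≤ -1 := by
  constructor
  · intro h
    have two_zpow_lt : (2 : ℝ) ^ i < 2 ^ (0 : ℤ) := by
      simpa using h.trans two_mul_log_goldenRatio_lt_one
    exact Int.le_sub_one_of_lt ((zpow_lt_zpow_iff_right₀ one_lt_two).mp two_zpow_lt)
  · intro hi
    calc (2 : ℝ) ^ i ≤ 2 ^ (-1 : ℤ) := zpow_le_zpow_right₀ one_le_two hi
      _ = 1 / 2 := by norm_num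
      _ < 2 * log φ := half_lt_two_mul_log_goldenRatio

theorem exp_strict_convexity_small_general :
    (∀ t : ℝ, exp (-2 * t) + exp (-t / 2) < 2 * exp (-t) ↔ 0 < t ∧ t < 2 * log φ) ∧
    ∀ i : ℤ, exp (-(2 : ℝ) ^ (i + 1)) + exp (-(2 : ℝ) ^ (i - 1)) < 2 * exp (-(2 : ℝ) ^ i) ↔
      i ≤ -1 := by
  refine ⟨fun t ↦ exp_neg_two_mul_add_exp_neg_half_lt_iff, fun i ↦ ?_⟩
  have double : -(2 : ℝ) ^ (i + 1) = -2 * 2 ^ i := by rw [zpow_add_one₀ two_ne_zero]; ring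
  have half : -(2 : ℝ) ^ (i - 1) = -2 ^ i / 2 := by rw [zpow_sub_one₀ two_ne_zero]; ring
  rw [double, half, exp_neg_two_mul_add_exp_neg_half_lt_iff,
    and_iff_right (zpow_pos two_pos i), two_zpow_lt_two_mul_log_goldenRatio_iff]

theorem exp_strict_convexity_small :
    (∀ t : ℝ, 0 < t → t ≤ 1 / 2 →
      Real.exp (-2 * t) + Real.exp (-t / 2) < 2 * Real.exp (-t)) ∧
    ∀ i : ℤ, i ≤ -1 →
      Real.exp (-(2 : ℝ) ^ (i + 1)) + Real.exp (-(2 : ℝ) ^ (i - 1)) <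
        2 * Real.exp (-(2 : ℝ) ^ i) :=
  ⟨fun t ht0 ht ↦ (exp_strict_convexity_small_general.1 t).mpr
    ⟨ht0, ht.trans_lt half_lt_two_mul_log_goldenRatio⟩,
    fun i ↦ (exp_strict_convexity_small_general.2 i).mpr⟩
end

section
/- For a positive integer k, let a(k,q) denote the number of compositions of k whose largest part equals q. Then for every k \ge 1 the sequence q \mapsto a(k,q) on 1 \le q \le k is unimodal, and its maximum value is attained at q = \lfloor \log_2 k \rfloor or at q = \lfloor \log_2 k \rfloor + 1 and at no other value of q; moreover, each of these two locations attains the maximum for infinitely many k. -/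
/-- `maxPartCompositions k q` is the number of compositions of `k` (ordered lists of positive
integers summing to `k`) whose largest part equals `q`. -/
noncomputable def maxPartCompositions (k q : ℕ) : ℕ :=
  Nat.card {l : List ℕ // l.sum = k ∧ (∀ x ∈ l, 1 ≤ x ∧ x ≤ q) ∧ q ∈ l}

/-!
Let `F q k` be the number of compositions of `k` with all parts at most `q`. The number of those
with largest part `q` is `F q k - F (q - 1) k`, so whether it grows from `q = r + 1` to `q = r + 2`
is decided by the sign of the second difference `D r k = F r k + F (r + 2) k - 2 * F (r + 1) k`.

The proportion `F q k / 2 ^ (k - 1)` is close to `exp (-k / 2 ^ (q + 1))`, so with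
`x = exp (-k / 2 ^ (r + 3))` the sign of `D r k` is that of
`x ^ 4 - 2 * x ^ 2 + x = x * (x - 1) * (x ^ 2 + x - 1)`, which changes at `x = (√5 - 1) / 2`, i.e.
at `k / 2 ^ (r + 2) ≈ 0.96`. As this lies strictly between `1 / 2` and `1`, one has `D r k < 0` for
`r < k ≤ 2 ^ (r + 1)` and `D r k > 0` for `k ≥ 2 ^ (r + 2) - 1`; hence the counts increase strictly
up to `q = ⌊log₂ k⌋` and decrease strictly from `q = ⌊log₂ k⌋ + 1` on.

For `r ≥ 10`, explicit exponential bounds on the proportions give the two signs for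
`2 ^ r ≤ k ≤ 2 ^ (r + 1)` and for `r + 2` consecutive `k` from `2 ^ (r + 2) - 1` on; smaller `r` are
a finite computation. Every other `k` follows from a linear recurrence for `D r`, whose
inhomogeneous term `F (r + 2) n - F r (n + 1)` has a constant sign in each of the two regimes.
-/

/-- The compositions of `n` with all parts at most `q`, enumerated by their first part `i + 1`. -/
def boundedCompositions (q : ℕ) : ℕ → Finset (List ℕ)
  | 0 => {[]}
  | n + 1 => (Finset.range (min q (n + 1))).biUnion fun i =>
      (boundedCompositions q (n - i)).image (List.cons (i + 1))

theorem mem_boundedCompositions {q n : ℕ} {l : List ℕ} :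
    l ∈ boundedCompositions q n ↔ l.sum = n ∧ ∀ x ∈ l, 1 ≤ x ∧ x ≤ q := by
  induction l generalizing n with
  | nil => cases n <;> simp [boundedCompositions]
  | cons a l ih =>
    cases n with
    | zero =>
      simp only [boundedCompositions, Finset.mem_singleton, List.sum_cons, List.forall_mem_cons,
        reduceCtorEq, false_iff]
      omega
    | succ n =>
      simp only [boundedCompositions, Finset.mem_biUnion, Finset.mem_range, Finset.mem_image,
        List.cons.injEq, List.sum_cons, List.forall_mem_cons]
      constructor
      · rintro ⟨i, hi, _, hl, rfl, rfl⟩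
        rw [ih] at hl
        exact ⟨by omega, by omega, hl.2⟩
      · rintro ⟨hsum, ha, hl⟩
        exact ⟨a - 1, by omega, l, ih.2 ⟨by omega, hl⟩, by omega, rfl⟩

/-- The number of compositions of `n` with all parts at most `q`. -/
def boundedCount (q n : ℕ) : ℕ := (boundedCompositions q n).card

theorem maxPartCompositions_add_boundedCount (k q : ℕ) :
    maxPartCompositions k (q + 1) + boundedCount q k = boundedCount (q + 1) k := by
  have hmem : maxPartCompositions k (q + 1) =
      ((boundedCompositions (q + 1) k).filter (q + 1 ∈ ·)).card :=
    Nat.subtype_card _ fun l => by rw [Finset.mem_filter, mem_boundedCompositions, and_assoc]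
  have hnotMem : boundedCompositions q k =
      (boundedCompositions (q + 1) k).filter (q + 1 ∉ ·) := by
    ext l
    simp only [Finset.mem_filter, mem_boundedCompositions, and_assoc]
    refine and_congr_right fun _ => ⟨fun h => ⟨fun x hx => ?_, fun hq => ?_⟩, fun h x hx => ?_⟩
    · have := h x hx
      omega
    · have := h _ hq
      omega
    · have := h.1 x hx
      have : x ≠ q + 1 := fun hxq => h.2 (hxq ▸ hx)
      omega
  rw [hmem, boundedCount, hnotMem, boundedCount, Finset.card_filter_add_card_filter_not]

@[simp]
theorem boundedCount_zero_right (q : ℕ) : boundedCount q 0 = 1 := by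
  simp [boundedCount, boundedCompositions]

theorem boundedCount_succ (q n : ℕ) :
    boundedCount q (n + 1) = ∑ i ∈ Finset.range (min q (n + 1)), boundedCount q (n - i) := by
  rw [boundedCount, boundedCompositions, Finset.card_biUnion]
  · exact Finset.sum_congr rfl fun i _ =>
      Finset.card_image_of_injective _ List.cons_injective
  · intro i _ j _ hij
    simp only [Function.onFun, Finset.disjoint_left, Finset.mem_image, not_exists, not_and]
    rintro _ ⟨l, -, rfl⟩ l' - h
    simp only [List.cons.injEq] at h
    omega

@[simp]
theorem boundedCount_zero_succ (n : ℕ) : boundedCount 0 (n + 1) = 0 := by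
  simp [boundedCount_succ]

theorem boundedCount_add_eq_sum {q : ℕ} (hq : 1 ≤ q) (n : ℕ) :
    boundedCount q (n + q) = ∑ i ∈ Finset.range q, boundedCount q (n + i) := by
  obtain ⟨q, rfl⟩ := Nat.exists_eq_add_of_le' hq
  rw [← add_assoc, boundedCount_succ, min_eq_left (by omega), ← Finset.sum_range_reflect]
  refine Finset.sum_congr rfl fun i hi => ?_
  rw [Finset.mem_range] at hi
  congr 1
  omega

theorem boundedCount_recurrence {q n : ℕ} (h : 1 ≤ n + q) :
    boundedCount q (n + q + 1) + boundedCount q n = 2 * boundedCount q (n + q) := by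
  rcases Nat.eq_zero_or_pos q with rfl | hq
  · obtain ⟨n, rfl⟩ := Nat.exists_eq_add_of_le' h
    simp
  · calc boundedCount q (n + q + 1) + boundedCount q n
        = ∑ i ∈ Finset.range q, boundedCount q (n + (i + 1)) + boundedCount q (n + 0) := by
          rw [Nat.add_right_comm n q, boundedCount_add_eq_sum hq, add_zero]
          simp only [Nat.add_right_comm n 1, add_assoc]
      _ = ∑ i ∈ Finset.range q, boundedCount q (n + i) + boundedCount q (n + q) :=
          (Finset.sum_range_succ' (fun i => boundedCount q (n + i)) q).symm.trans
            (Finset.sum_range_succ _ q)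
      _ = 2 * boundedCount q (n + q) := by rw [← boundedCount_add_eq_sum hq, two_mul]

theorem boundedCount_succ_of_lt {q n : ℕ} (h : n < q) : boundedCount q (n + 1) = 2 ^ n := by
  induction n with
  | zero => simp [boundedCount_succ, show min q 1 = 1 by omega]
  | succ n ih =>
    have ih := ih (by omega)
    rw [boundedCount_succ, min_eq_right (by omega)] at ih ⊢
    rw [Finset.sum_range_succ']
    simp only [Nat.add_sub_add_right, Nat.sub_zero]
    rw [ih, boundedCount_succ, min_eq_right (by omega), ih]
    ring

theorem boundedCount_self_succ {q : ℕ} (hq : 1 ≤ q) : boundedCount q (q + 1) + 1 = 2 ^ q := by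
  obtain ⟨q, rfl⟩ := Nat.exists_eq_add_of_le' hq
  have h := boundedCount_recurrence (q := q + 1) (n := 0) (by omega)
  rwa [zero_add, boundedCount_zero_right, boundedCount_succ_of_lt (Nat.lt_succ_self q),
    ← pow_succ'] at h

/-- The second difference of `q ↦ boundedCount q k` at `q = r + 1`. -/
def boundedCountDiff (r k : ℕ) : ℤ :=
  boundedCount r k + boundedCount (r + 2) k - 2 * boundedCount (r + 1) k

theorem maxPartCompositions_sub (k r : ℕ) :
    (maxPartCompositions k (r + 2) : ℤ) - maxPartCompositions k (r + 1) =
      boundedCountDiff r k := by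
  have h₁ := maxPartCompositions_add_boundedCount k r
  have h₂ : maxPartCompositions k (r + 2) + boundedCount (r + 1) k = boundedCount (r + 2) k :=
    maxPartCompositions_add_boundedCount k (r + 1)
  rw [boundedCountDiff]
  omega

theorem boundedCountDiff_of_le {r k : ℕ} (hk : k ≤ r) : boundedCountDiff r k = 0 := by
  rw [boundedCountDiff]
  rcases k with _ | k
  · simp
  · rw [boundedCount_succ_of_lt (by omega), boundedCount_succ_of_lt (by omega),
      boundedCount_succ_of_lt (by omega)]
    ring

theorem boundedCountDiff_succ_self {r : ℕ} (hr : 1 ≤ r) : boundedCountDiff r (r + 1) = -1 := by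
  have h := boundedCount_self_succ hr
  rw [boundedCountDiff, boundedCount_succ_of_lt (q := r + 2) (by omega),
    boundedCount_succ_of_lt (q := r + 1) (by omega)]
  push_cast
  linarith [(mod_cast h : (boundedCount r (r + 1) : ℤ) + 1 = 2 ^ r)]

/-- Summing the recurrences over windows of the common length `r + 1` leaves the terms
`boundedCount (r + 2) n` and `boundedCount r (n + 1)` over. -/
theorem boundedCountDiff_recurrence (r n : ℕ) :
    boundedCountDiff r (n + r + 2) =
      ∑ i ∈ Finset.range (r + 1), boundedCountDiff r (n + 1 + i) +
        (boundedCount (r + 2) n - boundedCount r (n + 1)) := by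
  have hr : boundedCount r (n + r + 2) + boundedCount r (n + 1) =
      ∑ i ∈ Finset.range (r + 1), boundedCount r (n + 1 + i) := by
    have h := boundedCount_recurrence (q := r) (n := n + 1) (by omega)
    rw [Nat.add_right_comm n 1 r] at h
    rw [h, Finset.sum_range_succ, Nat.add_right_comm n 1 r, two_mul]
    rcases Nat.eq_zero_or_pos r with rfl | hr
    · simp
    · rw [← boundedCount_add_eq_sum hr, Nat.add_right_comm n 1 r]
  have hr₁ : boundedCount (r + 1) (n + r + 2) =
      ∑ i ∈ Finset.range (r + 1), boundedCount (r + 1) (n + 1 + i) := by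
    rw [← boundedCount_add_eq_sum (Nat.le_add_left 1 r)]
    congr 1
    omega
  have hr₂ : boundedCount (r + 2) (n + r + 2) =
      ∑ i ∈ Finset.range (r + 1), boundedCount (r + 2) (n + 1 + i) + boundedCount (r + 2) n := by
    rw [add_assoc n, boundedCount_add_eq_sum (Nat.le_add_left 1 (r + 1)), Finset.sum_range_succ']
    simp only [add_assoc, add_comm 1, add_zero]
  simp only [boundedCountDiff, Finset.sum_add_distrib, Finset.sum_sub_distrib, ← Finset.mul_sum,
    ← Nat.cast_sum]
  omega

/-- The proportion `boundedCount q (n + 1) / 2 ^ n` of the compositions of `n + 1` that have all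
parts at most `q`. -/
noncomputable def boundedDensity (q n : ℕ) : ℝ := boundedCount q (n + 1) / 2 ^ n

theorem cast_boundedCount_succ (q n : ℕ) :
    (boundedCount q (n + 1) : ℝ) = 2 ^ n * boundedDensity q n := by
  rw [boundedDensity]
  field_simp

theorem cast_boundedCountDiff_succ (r n : ℕ) :
    (boundedCountDiff r (n + 1) : ℝ) =
      2 ^ n * (boundedDensity r n + boundedDensity (r + 2) n - 2 * boundedDensity (r + 1) n) := by
  rw [boundedCountDiff]
  push_cast [cast_boundedCount_succ]
  ring

theorem boundedDensity_nonneg (q n : ℕ) : 0 ≤ boundedDensity q n := by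
  rw [boundedDensity]
  positivity

theorem boundedDensity_of_lt {q n : ℕ} (h : n < q) : boundedDensity q n = 1 := by
  rw [boundedDensity, boundedCount_succ_of_lt h]
  push_cast
  field_simp

theorem boundedDensity_self (q : ℕ) : boundedDensity q q = 1 - 1 / 2 ^ q := by
  rcases Nat.eq_zero_or_pos q with rfl | hq
  · simp [boundedDensity]
  · have h : (boundedCount q (q + 1) : ℝ) + 1 = 2 ^ q := mod_cast boundedCount_self_succ hq
    rw [boundedDensity, eq_sub_of_add_eq h]
    field_simp

theorem boundedDensity_recurrence (q n : ℕ) :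
    boundedDensity q (n + q + 1) = boundedDensity q (n + q) - boundedDensity q n / 2 ^ (q + 1) := by
  have h := boundedCount_recurrence (q := q) (n := n + 1) (by omega)
  rw [Nat.add_right_comm n 1 q] at h
  have h' : (boundedCount q (n + q + 1 + 1) : ℝ) + boundedCount q (n + 1) =
      2 * boundedCount q (n + q + 1) := mod_cast h
  rw [boundedDensity, boundedDensity, boundedDensity, eq_sub_of_add_eq h']
  field_simp
  ring

theorem boundedDensity_antitone (q : ℕ) : Antitone (boundedDensity q) := by
  refine antitone_nat_of_succ_le fun n => ?_
  rcases lt_trichotomy (n + 1) q with h | rfl | h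
  · rw [boundedDensity_of_lt h, boundedDensity_of_lt (by omega)]
  · rw [boundedDensity_self, boundedDensity_of_lt (Nat.lt_succ_self n)]
    exact sub_le_self _ (by positivity)
  · obtain ⟨j, rfl⟩ := Nat.exists_eq_add_of_le' (Nat.le_of_lt_succ h)
    rw [boundedDensity_recurrence]
    exact sub_le_self _ (div_nonneg (boundedDensity_nonneg q j) (by positivity))

theorem boundedDensity_le_one (q n : ℕ) : boundedDensity q n ≤ 1 := by
  refine (boundedDensity_antitone q (Nat.zero_le n)).trans ?_
  rcases Nat.eq_zero_or_pos q with rfl | hq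
  · simp [boundedDensity_self]
  · exact (boundedDensity_of_lt hq).le

theorem one_sub_le_boundedDensity (q n : ℕ) :
    1 - (n + 2) / 2 ^ (q + 1) ≤ boundedDensity q n := by
  induction n with
  | zero =>
    rcases Nat.eq_zero_or_pos q with rfl | hq
    · norm_num [boundedDensity_self]
    · rw [boundedDensity_of_lt hq]
      exact sub_le_self _ (by positivity)
  | succ n ih =>
    rcases lt_trichotomy (n + 1) q with h | rfl | h
    · rw [boundedDensity_of_lt h]
      exact sub_le_self _ (by positivity)
    · rw [boundedDensity_self, pow_succ, ← div_div, div_right_comm]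
      gcongr
      push_cast
      linarith [n.cast_nonneg (α := ℝ)]
    · obtain ⟨j, rfl⟩ := Nat.exists_eq_add_of_le' (Nat.le_of_lt_succ h)
      have hj : boundedDensity q j / 2 ^ (q + 1) ≤ 1 / 2 ^ (q + 1) := by
        gcongr
        exact boundedDensity_le_one q j
      rw [boundedDensity_recurrence]
      refine (sub_le_sub ih hj).trans_eq' ?_
      push_cast
      ring

theorem boundedDensity_succ_le {q n : ℕ} (h : q ≤ n) :
    boundedDensity q (n + 1) ≤ (1 - 1 / 2 ^ (q + 1)) * boundedDensity q n := by
  obtain ⟨j, rfl⟩ := Nat.exists_eq_add_of_le' h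
  have hj : boundedDensity q (j + q) / 2 ^ (q + 1) ≤ boundedDensity q j / 2 ^ (q + 1) := by
    gcongr
    exact boundedDensity_antitone q (Nat.le_add_right j q)
  rw [boundedDensity_recurrence, one_sub_mul, one_div_mul_eq_div]
  linarith

theorem boundedDensity_le_exp {q n : ℕ} (h : q ≤ n) :
    boundedDensity q n ≤ Real.exp (-((n + 1 - q) / 2 ^ (q + 1))) := by
  obtain ⟨j, rfl⟩ := Nat.exists_eq_add_of_le' h
  have hc : (0 : ℝ) ≤ 1 - 1 / 2 ^ (q + 1) :=
    sub_nonneg.2 ((div_le_one (by positivity)).2 (one_le_pow₀ one_le_two))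
  have hself : boundedDensity q q ≤ 1 - 1 / 2 ^ (q + 1) := by
    rw [boundedDensity_self]
    gcongr <;> norm_num
  calc boundedDensity q (j + q)
      ≤ (1 - 1 / 2 ^ (q + 1)) ^ j * boundedDensity q (0 + q) :=
        le_geom (u := fun i => boundedDensity q (i + q)) hc j fun i _ => by
          rw [Nat.add_right_comm]
          exact boundedDensity_succ_le (Nat.le_add_left q i)
    _ ≤ (1 - 1 / 2 ^ (q + 1)) ^ (j + 1) := by
        rw [zero_add, pow_succ _ j]
        gcongr
    _ ≤ Real.exp (-(1 / 2 ^ (q + 1))) ^ (j + 1) := by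
        gcongr
        exact Real.one_sub_le_exp_neg _
    _ = Real.exp (-(((j + q : ℕ) + 1 - q) / 2 ^ (q + 1))) := by
        rw [← Real.exp_nat_mul]
        push_cast
        ring_nf

section LowerBound

variable {q : ℕ} {β : ℝ}

theorem sq_le_boundedDensity_self (hβ₀ : 0 ≤ β) (hβ₁ : β ≤ 1)
    (hβ : 1 / 2 ^ (q + 1) ≤ β ^ (q + 1) * (1 - β)) : β ^ 2 ≤ boundedDensity q q := by
  have hpow : β ^ (q + 1) ≤ β := pow_le_of_le_one hβ₀ hβ₁ q.succ_ne_zero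
  have hle := mul_le_mul_of_nonneg_right hpow (sub_nonneg.2 hβ₁)
  have htwo : (1 : ℝ) / 2 ^ q = 2 * (1 / 2 ^ (q + 1)) := by
    field_simp
    ring
  rw [boundedDensity_self, htwo]
  nlinarith [sq_nonneg (1 - β)]

/-- If `β` satisfies the characteristic inequality of `boundedDensity_recurrence`, then `β` bounds
the decay of `boundedDensity q` from below: the ratio bound over the previous `q` steps gives
`β ^ (q + 1) * boundedDensity q j ≤ boundedDensity q (j + q)`, which controls the term subtracted
by the recurrence. -/
theorem mul_boundedDensity_le_succ (hβ₀ : 0 ≤ β) (hβ₁ : β ≤ 1)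
    (hβ : 1 / 2 ^ (q + 1) ≤ β ^ (q + 1) * (1 - β)) {n : ℕ} (hn : q ≤ n) :
    β * boundedDensity q n ≤ boundedDensity q (n + 1) := by
  induction n using Nat.strong_induction_on with
  | _ n ih =>
    obtain ⟨j, rfl⟩ := Nat.exists_eq_add_of_le' hn
    have hdecay : β ^ (q + 1) * boundedDensity q j ≤ boundedDensity q (j + q) := by
      rcases lt_or_ge j q with hj | hj
      · calc β ^ (q + 1) * boundedDensity q j
            ≤ β ^ (j + 2) := by
              rw [boundedDensity_of_lt hj, mul_one]
              exact pow_le_pow_of_le_one hβ₀ hβ₁ (by omega)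
          _ ≤ β ^ j * boundedDensity q (q + 0) := by
              rw [pow_add, add_zero]
              gcongr
              exact sq_le_boundedDensity_self hβ₀ hβ₁ hβ
          _ ≤ boundedDensity q (q + j) :=
              geom_le (u := fun i => boundedDensity q (q + i)) hβ₀ j fun i _ =>
                ih (q + i) (by omega) (by omega)
          _ = boundedDensity q (j + q) := by rw [add_comm]
      · calc β ^ (q + 1) * boundedDensity q j
            ≤ β ^ q * boundedDensity q (j + 0) :=
              mul_le_mul_of_nonneg_right (pow_le_pow_of_le_one hβ₀ hβ₁ q.le_succ)
                (boundedDensity_nonneg q j)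
          _ ≤ boundedDensity q (j + q) :=
              geom_le (u := fun i => boundedDensity q (j + i)) hβ₀ q fun i _ =>
                ih (j + i) (by omega) (by omega)
    have hdrop : boundedDensity q j / 2 ^ (q + 1) ≤ (1 - β) * boundedDensity q (j + q) :=
      calc boundedDensity q j / 2 ^ (q + 1)
          = 1 / 2 ^ (q + 1) * boundedDensity q j := (one_div_mul_eq_div _ _).symm
        _ ≤ β ^ (q + 1) * (1 - β) * boundedDensity q j :=
          mul_le_mul_of_nonneg_right hβ (boundedDensity_nonneg q j)
        _ = (1 - β) * (β ^ (q + 1) * boundedDensity q j) := by ring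
        _ ≤ (1 - β) * boundedDensity q (j + q) :=
          mul_le_mul_of_nonneg_left hdecay (sub_nonneg.2 hβ₁)
    rw [boundedDensity_recurrence]
    linarith

theorem pow_le_boundedDensity (hβ₀ : 0 ≤ β) (hβ₁ : β ≤ 1)
    (hβ : 1 / 2 ^ (q + 1) ≤ β ^ (q + 1) * (1 - β)) (n : ℕ) :
    β ^ (n + 2) ≤ boundedDensity q (n + q) :=
  calc β ^ (n + 2)
      ≤ β ^ n * boundedDensity q (0 + q) := by
        rw [pow_add, zero_add]
        gcongr
        exact sq_le_boundedDensity_self hβ₀ hβ₁ hβ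
    _ ≤ boundedDensity q (n + q) :=
        geom_le (u := fun i => boundedDensity q (i + q)) hβ₀ n fun i _ => by
          rw [Nat.add_right_comm]
          exact mul_boundedDensity_le_succ hβ₀ hβ₁ hβ (Nat.le_add_left q i)

theorem exp_neg_mul_le_boundedDensity {y : ℝ} (hy₀ : 0 ≤ y)
    (hy : 1 / 2 ^ (q + 1) ≤ y * Real.exp (-((q + 2) * y))) {n : ℕ} (hn : q ≤ n) :
    Real.exp (-((n + 2 - q) * y)) ≤ boundedDensity q n := by
  obtain ⟨j, rfl⟩ := Nat.exists_eq_add_of_le' hn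
  have hβ : 1 / 2 ^ (q + 1) ≤ Real.exp (-y) ^ (q + 1) * (1 - Real.exp (-y)) :=
    calc (1 : ℝ) / 2 ^ (q + 1)
        ≤ y * Real.exp (-((q + 2) * y)) := hy
      _ = Real.exp (-y) ^ (q + 1) * (y * Real.exp (-y)) := by
        rw [mul_left_comm, ← pow_succ, ← Real.exp_nat_mul]
        push_cast
        ring_nf
      _ ≤ Real.exp (-y) ^ (q + 1) * (1 - Real.exp (-y)) := by
        gcongr
        have hexp : Real.exp y * Real.exp (-y) = 1 := by rw [← Real.exp_add]; simp
        nlinarith [Real.add_one_le_exp y, Real.exp_pos (-y)]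
  calc Real.exp (-(((j + q : ℕ) + 2 - q) * y))
      = Real.exp (-y) ^ (j + 2) := by
        rw [← Real.exp_nat_mul]
        push_cast
        ring_nf
    _ ≤ boundedDensity q (j + q) :=
        pow_le_boundedDensity (Real.exp_pos _).le (Real.exp_le_one_iff.2 (neg_nonpos.2 hy₀)) hβ j

theorem four_mul_sq_le_two_pow (hq : 8 ≤ q) : 4 * (q + 3) ^ 2 ≤ 2 ^ (q + 1) := by
  induction q, hq using Nat.le_induction with
  | base => norm_num
  | succ q hq ih =>
    rw [pow_succ 2]
    nlinarith

theorem exp_le_boundedDensity (hq : 8 ≤ q) {n : ℕ} (hn : q ≤ n) :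
    Real.exp (-((n + 2 - q) / 2 ^ (q + 1) * (1 + (q + 3) / 2 ^ (q + 1)))) ≤
      boundedDensity q n := by
  have hM : (4 * (q + 3) ^ 2 : ℝ) ≤ 2 ^ (q + 1) := mod_cast four_mul_sq_le_two_pow hq
  generalize hMdef : (2 : ℝ) ^ (q + 1) = M at hM ⊢
  have hM₀ : 0 < M := hMdef ▸ by positivity
  set s : ℝ := (q + 3) / M with hs
  have hs₀ : 0 ≤ s := by positivity
  have hsM : s * M = q + 3 := div_mul_cancel₀ _ hM₀.ne'
  have hs₁ : 4 * (q + 3) * s ≤ 1 := by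
    rw [hs, ← mul_div_assoc, div_le_one hM₀]
    linarith
  have hy : 1 / 2 ^ (q + 1) ≤ (1 + s) / M * Real.exp (-((q + 2) * ((1 + s) / M))) := by
    have hs₂ : (q + 2) * (1 + s) ^ 2 ≤ q + 3 := by nlinarith
    calc 1 / 2 ^ (q + 1)
        = 1 / M := by rw [hMdef]
      _ ≤ (1 + s) / M * (1 - (q + 2) * ((1 + s) / M)) := by
        rw [div_mul_eq_mul_div, ← mul_div_assoc, one_sub_div hM₀.ne', ← mul_div_assoc]
        gcongr
        rw [le_div_iff₀ hM₀]
        linarith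
      _ ≤ _ := by
        gcongr
        exact Real.one_sub_le_exp_neg _
  convert exp_neg_mul_le_boundedDensity (by positivity) hy hn using 3
  ring

theorem exp_le_boundedDensity_of_le (hq : 8 ≤ q) {n : ℕ} (hn : q ≤ n) {x δ : ℝ}
    (hx : n + 2 - q ≤ x * 2 ^ (q + 1)) (hδ : q + 3 ≤ δ * 2 ^ (q + 1)) :
    Real.exp (-(x * (1 + δ))) ≤ boundedDensity q n := by
  refine (Real.exp_le_exp.2 (neg_le_neg ?_)).trans (exp_le_boundedDensity hq hn)
  have hn' : (q : ℝ) ≤ n := mod_cast hn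
  have hx' : (n + 2 - q) / 2 ^ (q + 1) ≤ x := (div_le_iff₀ (by positivity)).2 hx
  have hδ' : (q + 3) / 2 ^ (q + 1) ≤ δ := (div_le_iff₀ (by positivity)).2 hδ
  have hx₀ : 0 ≤ x := le_trans (div_nonneg (by linarith) (by positivity)) hx'
  gcongr

end LowerBound

theorem two_mul_succ_le_two_pow {q : ℕ} (hq : 3 ≤ q) : 2 * (q + 1) ≤ 2 ^ q := by
  induction q, hq using Nat.le_induction with
  | base => norm_num
  | succ q hq ih => omega

theorem one_sub_mul_boundedDensity_le_succ {q n : ℕ} (hq : 3 ≤ q) (hn : q ≤ n) :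
    (1 - 1 / 2 ^ q) * boundedDensity q n ≤ boundedDensity q (n + 1) := by
  have hpow : (2 * (q + 1) : ℝ) ≤ 2 ^ q := mod_cast two_mul_succ_le_two_pow hq
  have hle : (1 : ℝ) / 2 ^ q ≤ 1 := (div_le_one (by positivity)).2 (one_le_pow₀ one_le_two)
  have hbernoulli : (1 / 2 : ℝ) ≤ (1 - 1 / 2 ^ q) ^ (q + 1) :=
    calc (1 / 2 : ℝ) ≤ 1 + (q + 1 : ℕ) * (-(1 / 2 ^ q)) := by
          have : (q + 1 : ℝ) / 2 ^ q ≤ 1 / 2 := by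
            rw [div_le_iff₀ (by positivity)]
            linarith
          push_cast
          linarith [mul_one_div (q + 1 : ℝ) (2 ^ q)]
      _ ≤ (1 + -(1 / 2 ^ q)) ^ (q + 1) := one_add_mul_le_pow (by linarith) _
      _ = (1 - 1 / 2 ^ q) ^ (q + 1) := by rw [sub_eq_add_neg]
  refine mul_boundedDensity_le_succ (sub_nonneg.2 hle) (sub_le_self _ (by positivity)) ?_ hn
  rw [sub_sub_cancel, pow_succ' 2, ← div_div, div_eq_mul_one_div (1 / 2)]
  gcongr

theorem exp_neg_three_halves_le : Real.exp (-(3 / 2)) ≤ 1 / 4 := by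
  refine (pow_le_pow_iff_left₀ (Real.exp_pos _).le (by norm_num) two_ne_zero).1 ?_
  calc Real.exp (-(3 / 2)) ^ 2
      = Real.exp (-1) ^ 3 := by
        rw [← Real.exp_nat_mul, ← Real.exp_nat_mul]
        norm_num
    _ ≤ 0.3679 ^ 3 := by
        gcongr
        linarith [Real.exp_neg_one_lt_d9]
    _ ≤ (1 / 4) ^ 2 := by norm_num

theorem boundedDensity_le_quarter {r n : ℕ} (hn : 2 ^ (r + 2) ≤ n + 2) :
    boundedDensity r n ≤ 1 / 4 := by
  have hr : r + 1 ≤ 2 ^ r := Nat.lt_two_pow_self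
  have hfour : 2 ^ (r + 2) = 4 * 2 ^ r := by ring
  have hexponent : (3 / 2 : ℝ) ≤ (n + 1 - r) / 2 ^ (r + 1) := by
    have hn' : (4 * 2 ^ r : ℝ) ≤ n + 2 := mod_cast hfour ▸ hn
    have hr' : (r + 1 : ℝ) ≤ 2 ^ r := mod_cast hr
    rw [le_div_iff₀ (by positivity)]
    linarith [pow_succ (2 : ℝ) r]
  exact (boundedDensity_le_exp (by omega)).trans
    ((Real.exp_le_exp.2 (neg_le_neg hexponent)).trans exp_neg_three_halves_le)

theorem two_mul_boundedDensity_le {r n : ℕ} (hr : 1 ≤ r) (hn : 2 ^ (r + 2) ≤ n + 2) :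
    2 * boundedDensity r n ≤ boundedDensity (r + 2) n := by
  have hpow : r < 2 ^ r := Nat.lt_two_pow_self
  have hfour : 2 ^ (r + 2) = 4 * 2 ^ r := by ring
  obtain ⟨n₀, hn₀⟩ := Nat.exists_eq_add_of_le' (show 2 ≤ 2 ^ (r + 2) by omega)
  replace hn : n₀ ≤ n := by omega
  induction n, hn using Nat.le_induction with
  | base =>
    have hhalf : 1 / 2 ≤ boundedDensity (r + 2) n₀ := by
      refine le_trans (le_of_eq ?_) (one_sub_le_boundedDensity (r + 2) n₀)
      have hn₀' : (n₀ + 2 : ℝ) = 2 ^ (r + 2) := mod_cast hn₀.symm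
      rw [hn₀', pow_succ _ (r + 2), div_mul_cancel_left₀ (by positivity)]
      norm_num
    linarith [boundedDensity_le_quarter hn₀.le]
  | succ n hn ih =>
    calc 2 * boundedDensity r (n + 1)
        ≤ 2 * ((1 - 1 / 2 ^ (r + 1)) * boundedDensity r n) := by
          gcongr
          exact boundedDensity_succ_le (by omega)
      _ = (1 - 1 / 2 ^ (r + 1)) * (2 * boundedDensity r n) := by ring
      _ ≤ (1 - 1 / 2 ^ (r + 2)) * boundedDensity (r + 2) n := by
          have hle : (1 : ℝ) / 2 ^ (r + 2) ≤ 1 :=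
            (div_le_one (by positivity)).2 (one_le_pow₀ one_le_two)
          gcongr
          · linarith [boundedDensity_nonneg r n]
          · linarith
          · norm_num
      _ ≤ boundedDensity (r + 2) (n + 1) :=
          one_sub_mul_boundedDensity_le_succ (by omega) (by omega)

theorem boundedCount_succ_le_add_two {r n : ℕ} (hn : 2 ^ (r + 2) ≤ n + 1) :
    boundedCount r (n + 1) ≤ boundedCount (r + 2) n := by
  rcases Nat.eq_zero_or_pos r with rfl | hr
  · simp
  obtain ⟨n, rfl⟩ : ∃ m, n = m + 1 := Nat.exists_eq_add_of_le' (by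
    have : r + 2 < 2 ^ (r + 2) := Nat.lt_two_pow_self
    omega)
  rw [← Nat.cast_le (α := ℝ), cast_boundedCount_succ, cast_boundedCount_succ, pow_succ, mul_assoc]
  gcongr
  exact (mul_le_mul_of_nonneg_left (boundedDensity_antitone r n.le_succ) zero_le_two).trans
    (two_mul_boundedDensity_le hr hn)

theorem boundedCount_add_two_le_succ {r n : ℕ} (hn : n + 2 ≤ 2 ^ r) :
    boundedCount (r + 2) n ≤ boundedCount r (n + 1) := by
  rcases n with _ | n
  · have hr : 0 < r := Nat.pos_of_ne_zero fun h => by simp [h] at hn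
    simp [boundedCount_succ_of_lt hr]
  · have hhalf : 1 / 2 ≤ boundedDensity r (n + 1) := by
      refine le_trans ?_ (one_sub_le_boundedDensity r (n + 1))
      have hn' : (n + 1 + 2 : ℝ) ≤ 2 ^ r := mod_cast hn
      rw [le_sub_comm, div_le_iff₀ (by positivity)]
      push_cast
      linarith [pow_succ (2 : ℝ) r]
    rw [← Nat.cast_le (α := ℝ), cast_boundedCount_succ, cast_boundedCount_succ, pow_succ,
      mul_assoc]
    gcongr
    linarith [boundedDensity_le_one (r + 2) n]

theorem two_pow_ten_mul_le {r : ℕ} (hr : 10 ≤ r) : 2 ^ 10 * r ≤ 10 * 2 ^ r := by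
  induction r, hr using Nat.le_induction with
  | base => norm_num
  | succ r hr ih => omega

theorem one_sub_mul_exp_neg_le (x y : ℝ) : (1 - x) * Real.exp (-y) ≤ Real.exp (-(x + y)) := by
  rw [neg_add, Real.exp_add]
  gcongr
  exact Real.one_sub_le_exp_neg x

theorem exp_neg_le_of_le {x : ℝ} (hx : 1 - 12 / 4096 ≤ x) : Real.exp (-x) ≤ 0.369 := by
  have hshift := one_sub_mul_exp_neg_le (12 / 4096) (1 - 12 / 4096)
  rw [add_sub_cancel] at hshift
  linarith [Real.exp_neg_one_lt_d9, Real.exp_le_exp.2 (neg_le_neg hx)]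

theorem le_exp_neg_of_le_half {x : ℝ} (hx : x ≤ 0.501) : 0.6059 ≤ Real.exp (-x) := by
  have hsq : Real.exp (-0.501) ^ 2 = Real.exp (-(0.002 + 1)) := by
    rw [← Real.exp_nat_mul]
    norm_num
  have hlower : (0.6059 : ℝ) ≤ Real.exp (-0.501) := by
    refine (pow_le_pow_iff_left₀ (by norm_num) (Real.exp_pos _).le two_ne_zero).1 ?_
    rw [hsq]
    linarith [Real.exp_neg_one_gt_d9, one_sub_mul_exp_neg_le 0.002 1]
  exact hlower.trans (Real.exp_le_exp.2 (neg_le_neg hx))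

theorem le_exp_neg_of_le_two {x : ℝ} (hx : x ≤ 2.015) : 0.1333 ≤ Real.exp (-x) := by
  have hsq : Real.exp (-1) ^ 2 = Real.exp (-2) := by
    rw [← Real.exp_nat_mul]
    norm_num
  have hshift : (1 - 0.015) * Real.exp (-2) ≤ Real.exp (-2.015) := by
    convert one_sub_mul_exp_neg_le 0.015 2 using 2
    norm_num
  nlinarith [Real.exp_neg_one_gt_d9, Real.exp_le_exp.2 (neg_le_neg hx)]

/-- For `n` close to `2 ^ (r + 2)` the densities of index `r`, `r + 1` and `r + 2` are close to
`exp (-2)`, `exp (-1)` and `exp (-1 / 2)`. -/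
theorem two_mul_boundedDensity_lt {r n : ℕ} (hr : 10 ≤ r) (hn : 2 ^ (r + 2) ≤ n + 2)
    (hn' : n + 1 ≤ 2 ^ (r + 2) + r) :
    2 * boundedDensity (r + 1) n < boundedDensity r n + boundedDensity (r + 2) n := by
  have hr₀ : 2 ^ 10 * r ≤ 10 * 2 ^ r := two_pow_ten_mul_le hr
  rw [pow_add] at hn hn'
  have hr₁ : (10 : ℝ) ≤ r := mod_cast hr
  have hr₂ : (2 ^ 10 * r : ℝ) ≤ 10 * 2 ^ r := mod_cast hr₀
  have hn₁ : (2 ^ r * 2 ^ 2 : ℝ) ≤ n + 2 := mod_cast hn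
  have hn₂ : (n + 1 : ℝ) ≤ 2 ^ r * 2 ^ 2 + r := mod_cast hn'
  have hmid : boundedDensity (r + 1) n ≤ 0.369 := by
    refine (boundedDensity_le_exp (by omega)).trans (exp_neg_le_of_le ?_)
    rw [le_div_iff₀ (by positivity), add_assoc, pow_add]
    push_cast
    linarith
  have hhigh : 0.6059 ≤ boundedDensity (r + 2) n := by
    refine (le_exp_neg_of_le_half ?_).trans (exp_le_boundedDensity_of_le (x := 1 / 2)
      (δ := 15 / 8192) (by omega) (by omega) ?_ ?_)
    · norm_num
    all_goals
      rw [add_assoc r, pow_add]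
      push_cast
      linarith
  have hlow : 0.1333 ≤ boundedDensity r n := by
    refine (le_exp_neg_of_le_two ?_).trans (exp_le_boundedDensity_of_le (x := 2 * (1 + 1 / 4096))
      (δ := 13 / 2048) (by omega) (by omega) ?_ ?_)
    · norm_num
    all_goals
      rw [pow_add]
      linarith
  linarith

theorem cubic_lt_of_mem_Icc {a : ℝ} (ha : a ∈ Set.Icc 0.75 0.9) : a ^ 3 + 1 < 1.994 * a := by
  obtain ⟨ha₁, ha₂⟩ := ha
  nlinarith [mul_nonneg (sub_nonneg.2 ha₁) (sub_nonneg.2 ha₂)]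

theorem exp_neg_half_mem_Icc {z : ℝ} (hz : z ∈ Set.Icc 0.247 0.5) :
    Real.exp (-(z / 2)) ∈ Set.Icc 0.75 0.9 := by
  refine ⟨by linarith [hz.2, Real.one_sub_le_exp_neg (z / 2)], ?_⟩
  rw [Real.exp_neg]
  refine inv_le_of_inv_le₀ (by norm_num) ?_
  linarith [hz.1, Real.add_one_le_exp (z / 2)]

/-- With `a = exp (-n / 2 ^ (r + 3))` the densities of index `r`, `r + 1` and `r + 2` are close to
`a ^ 4`, `a ^ 2` and `a`, which turns the claim into `cubic_lt_of_mem_Icc`. The numerator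
`n - r - 1` of `z` makes the bound on the largest density exact. -/
theorem boundedDensity_lt_two_mul {r n : ℕ} (hr : 10 ≤ r) (hn : 2 ^ r ≤ n + 1)
    (hn' : n + 1 ≤ 2 ^ (r + 1)) :
    boundedDensity r n + boundedDensity (r + 2) n < 2 * boundedDensity (r + 1) n := by
  have hr₀ : 2 ^ 10 * r ≤ 10 * 2 ^ r := two_pow_ten_mul_le hr
  have hr₁ : (10 : ℝ) ≤ r := mod_cast hr
  have hr₂ : (2 ^ 10 * r : ℝ) ≤ 10 * 2 ^ r := mod_cast hr₀
  have hn₁ : (2 ^ r : ℝ) ≤ n + 1 := mod_cast hn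
  have hn₂ : (n + 1 : ℝ) ≤ 2 ^ r * 2 := mod_cast hn'
  set z : ℝ := (n - r - 1) / (4 * 2 ^ r)
  set a := Real.exp (-(z / 2)) with ha
  have hz : z ∈ Set.Icc 0.247 0.5 := by
    rw [Set.mem_Icc, le_div_iff₀ (by positivity), div_le_iff₀ (by positivity)]
    constructor <;> linarith
  have hza : z * (4 * 2 ^ r) = n - r - 1 := div_mul_cancel₀ _ (by positivity)
  have ha₀ : a ∈ Set.Icc 0.75 0.9 := exp_neg_half_mem_Icc hz
  have hhigh : boundedDensity (r + 2) n ≤ a := by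
    refine (boundedDensity_le_exp (by omega)).trans (Real.exp_le_exp.2 (le_of_eq ?_))
    push_cast
    ring
  have hlow : boundedDensity r n ≤ a ^ 4 := by
    rw [ha, ← Real.exp_nat_mul]
    refine (boundedDensity_le_exp (by omega)).trans (Real.exp_le_exp.2 ?_)
    rw [mul_neg, neg_le_neg_iff, le_div_iff₀ (by positivity), pow_succ]
    push_cast
    linarith
  have hmid : (1 - 0.003) * a ^ 2 ≤ boundedDensity (r + 1) n := by
    have hsq : a ^ 2 = Real.exp (-z) := by
      rw [ha, ← Real.exp_nat_mul]
      ring_nf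
    rw [hsq]
    refine (one_sub_mul_exp_neg_le _ _).trans (le_trans (Real.exp_le_exp.2 ?_)
      (exp_le_boundedDensity_of_le (x := z + 1 / 2048) (δ := 14 / 4096) (by omega) (by omega)
        ?_ ?_))
    · linarith [hz.2]
    all_goals
      rw [add_assoc r, pow_add]
      push_cast
      linarith
  nlinarith [cubic_lt_of_mem_Icc ha₀, ha₀.1]

/-- The list of `boundedCount q n, …, boundedCount q 0`, in a form that the kernel evaluates
efficiently because each entry is computed from the preceding ones. -/
def boundedCounts (q : ℕ) : ℕ → List ℕ
  | 0 => [1]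
  | n + 1 => ((boundedCounts q n).take q).sum :: boundedCounts q n

theorem boundedCounts_eq_map (q n : ℕ) :
    boundedCounts q n = (List.range (n + 1)).map fun i => boundedCount q (n - i) := by
  induction n with
  | zero => simp [boundedCounts]
  | succ n ih =>
    rw [List.range_succ_eq_map, List.map_cons, List.map_map, Nat.sub_zero, boundedCount_succ,
      boundedCounts, ih, ← List.map_take, List.take_range]
    simp only [Function.comp_def, Nat.succ_eq_add_one, Nat.add_sub_add_right]
    rfl

theorem headI_boundedCounts (q n : ℕ) : (boundedCounts q n).headI = boundedCount q n := by
  simp [boundedCounts_eq_map, List.range_succ_eq_map]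

theorem two_mul_boundedCount_lt_of_lt_ten {r k : ℕ} (hr : r < 10) (hk : 2 ^ (r + 2) ≤ k + 1)
    (hk' : k ≤ 2 ^ (r + 2) + r) :
    2 * boundedCount (r + 1) k < boundedCount r k + boundedCount (r + 2) k := by
  have hcheck : ∀ r < 10, ∀ i < r + 2,
      2 * (boundedCounts (r + 1) (2 ^ (r + 2) - 1 + i)).headI <
        (boundedCounts r (2 ^ (r + 2) - 1 + i)).headI +
          (boundedCounts (r + 2) (2 ^ (r + 2) - 1 + i)).headI := by
    decide +kernel
  simp only [headI_boundedCounts] at hcheck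
  obtain ⟨i, rfl⟩ := Nat.exists_eq_add_of_le (Nat.sub_le_of_le_add hk)
  exact hcheck r hr i (by have := Nat.one_le_two_pow (n := r + 2); omega)

theorem boundedCount_lt_two_mul_of_lt_ten {r k : ℕ} (hr₀ : 1 ≤ r) (hr : r < 10) (hk : 2 ^ r ≤ k)
    (hk' : k ≤ 2 ^ (r + 1)) :
    boundedCount r k + boundedCount (r + 2) k < 2 * boundedCount (r + 1) k := by
  have hcheck : ∀ r < 10, 1 ≤ r → ∀ i < 2 ^ r + 1,
      (boundedCounts r (2 ^ r + i)).headI + (boundedCounts (r + 2) (2 ^ r + i)).headI <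
        2 * (boundedCounts (r + 1) (2 ^ r + i)).headI := by
    decide +kernel
  simp only [headI_boundedCounts] at hcheck
  obtain ⟨i, rfl⟩ := Nat.exists_eq_add_of_le hk
  exact hcheck r hr hr₀ i (by omega)

theorem boundedCountDiff_pos_of_le {r k : ℕ} (hk : 2 ^ (r + 2) ≤ k + 1)
    (hk' : k ≤ 2 ^ (r + 2) + r) : 0 < boundedCountDiff r k := by
  rcases lt_or_ge r 10 with hr | hr
  · have := two_mul_boundedCount_lt_of_lt_ten hr hk hk'
    rw [boundedCountDiff]
    omega
  · have hpow : r + 2 < 2 ^ (r + 2) := Nat.lt_two_pow_self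
    obtain ⟨n, rfl⟩ := Nat.exists_eq_add_of_le' (show 1 ≤ k by omega)
    rw [← Int.cast_pos (R := ℝ), cast_boundedCountDiff_succ]
    exact mul_pos (by positivity) (sub_pos.2 (two_mul_boundedDensity_lt hr hk hk'))

theorem boundedCountDiff_pos {r k : ℕ} (hk : 2 ^ (r + 2) ≤ k + 1) : 0 < boundedCountDiff r k := by
  induction k using Nat.strong_induction_on with
  | _ k ih =>
    rcases le_or_gt k (2 ^ (r + 2) + r) with hk' | hk'
    · exact boundedCountDiff_pos_of_le hk hk'
    · have hpow : 1 ≤ 2 ^ (r + 2) := Nat.one_le_two_pow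
      obtain ⟨n, rfl⟩ := Nat.exists_eq_add_of_le' (show r + 2 ≤ k by omega)
      have hsum : 0 < ∑ i ∈ Finset.range (r + 1), boundedCountDiff r (n + 1 + i) :=
        Finset.sum_pos (fun i hi => by
          rw [Finset.mem_range] at hi
          exact ih _ (by omega) (by omega)) Finset.nonempty_range_add_one
      have hcount := boundedCount_succ_le_add_two (r := r) (n := n) (by omega)
      rw [← add_assoc, boundedCountDiff_recurrence]
      omega

theorem boundedCountDiff_neg_of_le_two_pow {r k : ℕ} (hr : 1 ≤ r) (hk : r < k) (hk' : k ≤ 2 ^ r) :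
    boundedCountDiff r k < 0 := by
  induction k using Nat.strong_induction_on with
  | _ k ih =>
    rcases (Nat.succ_le_of_lt hk).eq_or_lt with rfl | hrk
    · rw [boundedCountDiff_succ_self hr]
      exact neg_one_lt_zero
    · obtain ⟨n, rfl⟩ := Nat.exists_eq_add_of_le' (show r + 2 ≤ k by omega)
      have hsum : ∑ i ∈ Finset.range (r + 1), boundedCountDiff r (n + 1 + i) < 0 := by
        refine Finset.sum_neg' (fun i hi => ?_)
          ⟨r, Finset.self_mem_range_succ r, ih _ (by omega) (by omega) (by omega)⟩
        rw [Finset.mem_range] at hi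
        rcases le_or_gt (n + 1 + i) r with h | h
        · exact (boundedCountDiff_of_le h).le
        · exact (ih _ (by omega) h (by omega)).le
      have hcount := boundedCount_add_two_le_succ (r := r) (n := n) (by omega)
      rw [← add_assoc, boundedCountDiff_recurrence]
      omega

theorem boundedCountDiff_neg {r k : ℕ} (hr : 1 ≤ r) (hk : r < k) (hk' : k ≤ 2 ^ (r + 1)) :
    boundedCountDiff r k < 0 := by
  rcases le_total k (2 ^ r) with hkr | hkr
  · exact boundedCountDiff_neg_of_le_two_pow hr hk hkr
  rcases lt_or_ge r 10 with hr' | hr'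
  · have := boundedCount_lt_two_mul_of_lt_ten hr hr' hkr hk'
    rw [boundedCountDiff]
    omega
  · obtain ⟨n, rfl⟩ := Nat.exists_eq_add_of_le' (Nat.one_le_of_lt hk)
    rw [← Int.cast_lt_zero (R := ℝ), cast_boundedCountDiff_succ]
    exact mul_neg_of_pos_of_neg (by positivity) (sub_neg.2 (boundedDensity_lt_two_mul hr' hkr hk'))

theorem maxPartCompositions_lt_succ {k q : ℕ} (hq : 1 ≤ q) (hk : 2 ^ (q + 1) ≤ k + 1) :
    maxPartCompositions k q < maxPartCompositions k (q + 1) := by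
  obtain ⟨r, rfl⟩ := Nat.exists_eq_add_of_le' hq
  have hpos := boundedCountDiff_pos hk
  rw [← maxPartCompositions_sub] at hpos
  exact_mod_cast sub_pos.1 hpos

theorem maxPartCompositions_succ_lt {k q : ℕ} (hq : 2 ≤ q) (hk : q ≤ k) (hk' : k ≤ 2 ^ q) :
    maxPartCompositions k (q + 1) < maxPartCompositions k q := by
  obtain ⟨r, rfl⟩ := Nat.exists_eq_add_of_le' (one_le_two.trans hq)
  have hneg := boundedCountDiff_neg (Nat.le_of_succ_le_succ hq) hk hk'
  rw [← maxPartCompositions_sub] at hneg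
  exact_mod_cast sub_neg.1 hneg

theorem strictMonoOn_maxPartCompositions (k : ℕ) :
    StrictMonoOn (maxPartCompositions k) (Set.Icc 1 (Nat.log 2 k)) := by
  refine strictMonoOn_of_lt_add_one Set.ordConnected_Icc fun q _ hq hq' => ?_
  have hk : k ≠ 0 := by
    rintro rfl
    simp at hq'
  exact maxPartCompositions_lt_succ hq.1 ((Nat.pow_le_of_le_log hk hq'.2).trans k.le_succ)

theorem strictAntiOn_maxPartCompositions (k : ℕ) :
    StrictAntiOn (maxPartCompositions k) (Set.Icc (Nat.log 2 k + 1) k) := by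
  refine strictAntiOn_of_add_one_lt Set.ordConnected_Icc fun q _ hq hq' => ?_
  have hk : 2 ≤ k := (Nat.succ_le_succ ((Nat.le_add_left 1 _).trans hq.1)).trans hq'.2
  have hlog : 1 ≤ Nat.log 2 k := Nat.log_pos one_lt_two hk
  exact maxPartCompositions_succ_lt ((Nat.succ_le_succ hlog).trans hq.1) hq.2
    (Nat.lt_pow_of_log_lt one_lt_two hq.1).le

section Unimodal

variable {α : Type*} [LinearOrder α] {f : ℕ → α} {a b p : ℕ}

theorem exists_monotoneOn_antitoneOn (hap : a ≤ p + 1) (hpb : p + 1 ≤ b)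
    (hmono : MonotoneOn f (Set.Icc a p)) (hanti : AntitoneOn f (Set.Icc (p + 1) b)) :
    ∃ m ∈ Set.Icc a b, MonotoneOn f (Set.Icc a m) ∧ AntitoneOn f (Set.Icc m b) := by
  by_cases h : a ≤ p ∧ f (p + 1) ≤ f p
  · refine ⟨p, ⟨h.1, by omega⟩, hmono,
      antitoneOn_of_add_one_le Set.ordConnected_Icc fun q _ hq hq' => ?_⟩
    rcases hq.1.eq_or_lt with rfl | hpq
    · exact h.2
    · exact hanti ⟨hpq, hq.2⟩ ⟨by omega, hq'.2⟩ q.le_succ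
  · refine ⟨p + 1, ⟨hap, hpb⟩,
      monotoneOn_of_le_add_one Set.ordConnected_Icc fun q _ hq hq' => ?_, hanti⟩
    rcases (Nat.le_of_succ_le_succ hq'.2).eq_or_lt with rfl | hqp
    · exact (not_le.1 fun hle => h ⟨hq.1, hle⟩).le
    · exact hmono ⟨hq.1, hqp.le⟩ ⟨hq'.1, hqp⟩ q.le_succ

theorem le_max_of_monotoneOn_antitoneOn (hmono : MonotoneOn f (Set.Icc a p))
    (hanti : AntitoneOn f (Set.Icc (p + 1) b)) {q : ℕ} (haq : a ≤ q) (hqb : q ≤ b) :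
    f q ≤ max (f p) (f (p + 1)) := by
  rcases le_or_gt q p with hqp | hpq
  · exact le_max_of_le_left (hmono ⟨haq, hqp⟩ ⟨haq.trans hqp, le_rfl⟩ hqp)
  · exact le_max_of_le_right (hanti ⟨le_rfl, hpq.trans_le hqb⟩ ⟨hpq, hqb⟩ hpq)

theorem eq_or_eq_add_one_of_forall_le (hap : a ≤ p + 1) (hpb : p + 1 ≤ b)
    (hmono : StrictMonoOn f (Set.Icc a p)) (hanti : StrictAntiOn f (Set.Icc (p + 1) b))
    {q : ℕ} (haq : a ≤ q) (hqb : q ≤ b)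
    (hmax : ∀ q', a ≤ q' → q' ≤ b → f q' ≤ f q) : q = p ∨ q = p + 1 := by
  by_contra! hne
  rcases lt_or_ge q p with hqp | hpq
  · exact (hmax p (by omega) (by omega)).not_gt
      (hmono ⟨haq, hqp.le⟩ ⟨by omega, le_rfl⟩ hqp)
  · exact (hmax (p + 1) hap hpb).not_gt
      (hanti ⟨le_rfl, hpb⟩ ⟨by omega, hqb⟩ (by omega))

end Unimodal

theorem maxPartCompositions_le_max {k q : ℕ} (hq : 1 ≤ q) (hqk : q ≤ k) :
    maxPartCompositions k q ≤
      max (maxPartCompositions k (Nat.log 2 k)) (maxPartCompositions k (Nat.log 2 k + 1)) :=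
  le_max_of_monotoneOn_antitoneOn (strictMonoOn_maxPartCompositions k).monotoneOn
    (strictAntiOn_maxPartCompositions k).antitoneOn hq hqk

theorem maxPartCompositions_two_pow_le (n : ℕ) {q : ℕ} (hq : 1 ≤ q) (hqk : q ≤ 2 ^ (n + 2)) :
    maxPartCompositions (2 ^ (n + 2)) q ≤
      maxPartCompositions (2 ^ (n + 2)) (Nat.log 2 (2 ^ (n + 2))) := by
  refine (maxPartCompositions_le_max hq hqk).trans_eq (max_eq_left ?_)
  rw [Nat.log_pow one_lt_two]
  exact (maxPartCompositions_succ_lt (Nat.le_add_left 2 n) Nat.lt_two_pow_self.le le_rfl).le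

theorem maxPartCompositions_two_pow_sub_one_le (n : ℕ) {q : ℕ} (hq : 1 ≤ q)
    (hqk : q ≤ 2 ^ (n + 2) - 1) :
    maxPartCompositions (2 ^ (n + 2) - 1) q ≤
      maxPartCompositions (2 ^ (n + 2) - 1) (Nat.log 2 (2 ^ (n + 2) - 1) + 1) := by
  refine (maxPartCompositions_le_max hq hqk).trans_eq (max_eq_right ?_)
  have hlog : Nat.log 2 (2 ^ (n + 2) - 1) = n + 1 := by
    have hpow : 2 ^ (n + 2) = 2 ^ (n + 1) * 2 := pow_succ 2 (n + 1)
    have hpos : 0 < 2 ^ (n + 1) := Nat.two_pow_pos _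
    exact Nat.log_eq_of_pow_le_of_lt_pow (by omega) (by omega)
  rw [hlog]
  exact (maxPartCompositions_lt_succ (Nat.le_add_left 1 n)
    (Nat.sub_add_cancel Nat.one_le_two_pow).ge).le

theorem infinite_setOf_le_maxPartCompositions_log :
    {k : ℕ | 1 ≤ k ∧ ∀ q : ℕ, 1 ≤ q → q ≤ k →
      maxPartCompositions k q ≤ maxPartCompositions k (Nat.log 2 k)}.Infinite :=
  Set.infinite_of_injective_forall_mem (f := fun n : ℕ => 2 ^ (n + 2))
    (fun m n h => by simpa using h)
    fun n => ⟨Nat.one_le_two_pow, fun _ => maxPartCompositions_two_pow_le n⟩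

theorem infinite_setOf_le_maxPartCompositions_log_add_one :
    {k : ℕ | 1 ≤ k ∧ ∀ q : ℕ, 1 ≤ q → q ≤ k →
      maxPartCompositions k q ≤ maxPartCompositions k (Nat.log 2 k + 1)}.Infinite := by
  have hpow (n : ℕ) : n + 2 < 2 ^ (n + 2) := Nat.lt_two_pow_self
  refine Set.infinite_of_injective_forall_mem (f := fun n : ℕ => 2 ^ (n + 2) - 1)
    (fun m n h => ?_) fun n => ⟨?_, fun _ => maxPartCompositions_two_pow_sub_one_le n⟩
  · simpa using Nat.sub_one_cancel (Nat.two_pow_pos _) (Nat.two_pow_pos _) h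
  · have := hpow n
    omega

theorem odlyzko_richmond :
    (∀ k : ℕ, 1 ≤ k →
      -- unimodality in q
      (∃ m : ℕ, 1 ≤ m ∧ m ≤ k ∧
        (∀ q q' : ℕ, 1 ≤ q → q ≤ q' → q' ≤ m →
          maxPartCompositions k q ≤ maxPartCompositions k q') ∧
        (∀ q q' : ℕ, m ≤ q → q ≤ q' → q' ≤ k →
          maxPartCompositions k q' ≤ maxPartCompositions k q)) ∧
      -- the maximum is attained at ⌊log₂ k⌋ or ⌊log₂ k⌋ + 1 ...
      ((∀ q' : ℕ, 1 ≤ q' → q' ≤ k →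
          maxPartCompositions k q' ≤ maxPartCompositions k (Nat.log 2 k)) ∨
        (∀ q' : ℕ, 1 ≤ q' → q' ≤ k →
          maxPartCompositions k q' ≤ maxPartCompositions k (Nat.log 2 k + 1))) ∧
      -- ... and at no other value of q
      (∀ q : ℕ, 1 ≤ q → q ≤ k →
        (∀ q' : ℕ, 1 ≤ q' → q' ≤ k →
          maxPartCompositions k q' ≤ maxPartCompositions k q) →
        q = Nat.log 2 k ∨ q = Nat.log 2 k + 1)) ∧
    -- each of the two locations attains the maximum infinitely often
    {k : ℕ | 1 ≤ k ∧ ∀ q' : ℕ, 1 ≤ q' → q' ≤ k →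
      maxPartCompositions k q' ≤ maxPartCompositions k (Nat.log 2 k)}.Infinite ∧
    {k : ℕ | 1 ≤ k ∧ ∀ q' : ℕ, 1 ≤ q' → q' ≤ k →
      maxPartCompositions k q' ≤ maxPartCompositions k (Nat.log 2 k + 1)}.Infinite := by
  refine ⟨fun k hk => ?_, infinite_setOf_le_maxPartCompositions_log,
    infinite_setOf_le_maxPartCompositions_log_add_one⟩
  have hlog₁ : 1 ≤ Nat.log 2 k + 1 := Nat.le_add_left 1 _
  have hlog : Nat.log 2 k + 1 ≤ k := Nat.log_lt_self 2 (Nat.one_le_iff_ne_zero.1 hk)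
  have hmono := strictMonoOn_maxPartCompositions k
  have hanti := strictAntiOn_maxPartCompositions k
  refine ⟨?_, ?_, fun q => eq_or_eq_add_one_of_forall_le hlog₁ hlog hmono hanti⟩
  · obtain ⟨m, ⟨hm, hmk⟩, hmono', hanti'⟩ := exists_monotoneOn_antitoneOn hlog₁ hlog
      hmono.monotoneOn hanti.antitoneOn
    exact ⟨m, hm, hmk,
      fun q q' hq hqq' hq' => hmono' ⟨hq, hqq'.trans hq'⟩ ⟨hq.trans hqq', hq'⟩ hqq',
      fun q q' hq hqq' hq' => hanti' ⟨hq, hqq'.trans hq'⟩ ⟨hq.trans hqq', hq'⟩ hqq'⟩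
  · refine (le_total (maxPartCompositions k (Nat.log 2 k + 1))
      (maxPartCompositions k (Nat.log 2 k))).imp (fun h q' hq hqk => ?_) fun h q' hq hqk => ?_
    · exact (maxPartCompositions_le_max hq hqk).trans_eq (max_eq_left h)
    · exact (maxPartCompositions_le_max hq hqk).trans_eq (max_eq_right h)
end

section
/- For every fixed integer q \ge 2, the maximal polynomial coefficient satisfies \max_{0 \le k \le (q-1)n} C(n,q,k) \sim q^n \sqrt{6/((q^2-1)\pi n)} as n \to \infty; that is, the limit as n \to \infty of (\max_{0 \le k \le (q-1)n} C(n,q,k)) \cdot \sqrt{(q^2-1)\pi n / 6} / q^n equals 1. -/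
open Filter

/-!
Let `p` be a probability generating function with mean `μ` and variance `σ²`, and let `φ` be its
characteristic function recentred at `μ`. Fourier inversion writes `2π √n [x ^ k] p ^ n` as the
Fourier transform, at `(k - n μ) / √n`, of `s ↦ φ (s / √n) ^ n` on `|s| ≤ π √n`. These functions
converge pointwise to `exp (-σ² s² / 2)` by Taylor's formula at `0`. When `p` has two adjacent
positive coefficients, they are also dominated by a Gaussian, so they converge in `L¹` and their
Fourier transforms converge uniformly. Hence `√n [x ^ k] p ^ n` is uniformly close to the Gaussian
density at `(k - n μ) / √n`, whose peak `1 / √(2π σ²)` gives the size of the largest coefficient.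
The polynomial coefficients are the case of the uniform distribution on `{0, …, q - 1}`, where
`σ² = (q² - 1) / 12`.
-/

section LocalLimit

open MeasureTheory ProbabilityTheory Polynomial Complex Asymptotics
open scoped Real Topology NNReal

lemma isLittleO_cexp_sub_taylor_two (a : ℝ) :
    (fun t : ℝ => cexp (a * t * I) - (1 + a * t * I - a ^ 2 * t ^ 2 / 2))
      =o[𝓝 0] fun t : ℝ => t ^ 2 := by
  have hlim : Tendsto (fun t : ℝ => (a * t * I : ℂ)) (𝓝 0) (𝓝 0) := by
    have h : Continuous fun t : ℝ => (a * t * I : ℂ) := by fun_prop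
    simpa using h.tendsto 0
  have hO : (fun t : ℝ => (a * t * I : ℂ) ^ 2) =O[𝓝 0] fun t : ℝ => t ^ 2 :=
    .of_bound (a ^ 2) (.of_forall fun t => by simp [mul_pow])
  refine (((exp_sub_sum_range_succ_isLittleO_pow 2).comp_tendsto hlim).trans_isBigO hO).congr_left
    fun t => ?_
  simp only [Function.comp_apply, Finset.sum_range_succ, Finset.sum_range_zero, Nat.factorial]
  push_cast
  linear_combination -(a ^ 2 * t ^ 2 / 2 : ℂ) * I_sq

lemma tendsto_pow_gaussian_of_isLittleO {f : ℝ → ℂ} {v : ℝ}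
    (hf : (fun t => f t - (1 - v * t ^ 2 / 2)) =o[𝓝 0] fun t : ℝ => t ^ 2) (s : ℝ) :
    Tendsto (fun n : ℕ => f (s / √n) ^ n) atTop (𝓝 (cexp (-(v / 2) * s ^ 2))) := by
  have hlim : Tendsto (fun n : ℕ => s / √(n : ℝ)) atTop (𝓝 0) :=
    (Real.tendsto_sqrt_atTop.comp tendsto_natCast_atTop_atTop).const_div_atTop s
  have hsq (n : ℕ) : (s / √(n : ℝ)) ^ 2 = s ^ 2 / n := by
    rw [div_pow, Real.sq_sqrt n.cast_nonneg]
  have hO : (fun n : ℕ => (s / √(n : ℝ)) ^ 2) =O[atTop] fun n : ℕ => 1 / (n : ℂ) :=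
    .of_bound (s ^ 2) (.of_forall fun n => by rw [hsq]; simp [div_eq_mul_inv])
  refine tendsto_pow_exp_of_isLittleO_sub_add_div _
    (((hf.comp_tendsto hlim).trans_isBigO hO).congr_left fun n => ?_)
  have h := congrArg (Complex.ofReal) (hsq n)
  push_cast at h
  simp only [Function.comp_apply, ofReal_div, h]
  ring

/-- The powers `f ^ n` on the scale `√n`, cut off outside the window `[-a, a]` of the original
variable: the integrands to which the Laplace method applies. -/
noncomputable def rescaledPow (f : ℝ → ℂ) (a : ℝ) (n : ℕ) : ℝ → ℂ :=
  (Set.Ioc (-(a * √n)) (a * √n)).indicator fun s => f (s / √n) ^ n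

lemma norm_rescaledPow_le {f : ℝ → ℂ} {a c : ℝ}
    (hbound : ∀ t, |t| ≤ a → ‖f t‖ ≤ Real.exp (-c * t ^ 2)) (n : ℕ) (s : ℝ) :
    ‖rescaledPow f a n s‖ ≤ Real.exp (-c * s ^ 2) := by
  by_cases hs : s ∈ Set.Ioc (-(a * √n)) (a * √n)
  · have hn : 0 < √(n : ℝ) := (Real.sqrt_nonneg _).lt_of_ne' fun h => by simp [h] at hs
    have hst : |s / √n| ≤ a := by
      rw [abs_div, abs_of_pos hn, div_le_iff₀ hn]
      exact abs_le.mpr ⟨hs.1.le, hs.2⟩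
    rw [rescaledPow, Set.indicator_of_mem hs, norm_pow]
    calc ‖f (s / √n)‖ ^ n ≤ Real.exp (-c * (s / √n) ^ 2) ^ n := by gcongr; exact hbound _ hst
      _ = Real.exp (-c * s ^ 2) := by
        rw [← Real.exp_nat_mul, div_pow, Real.sq_sqrt n.cast_nonneg]
        have := Real.sqrt_pos.mp hn
        congr 1
        field_simp
  · rw [rescaledPow, Set.indicator_of_notMem hs, norm_zero]
    positivity

lemma integrable_rescaledPow {f : ℝ → ℂ} (hf : Continuous f) (a : ℝ) (n : ℕ) :
    Integrable (rescaledPow f a n) :=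
  (integrable_indicator_iff measurableSet_Ioc).mpr
    (Continuous.integrableOn_Ioc (by fun_prop))

lemma tendsto_rescaledPow {f : ℝ → ℂ} {a s : ℝ} {l : ℂ} (ha : 0 < a)
    (hlim : Tendsto (fun n : ℕ => f (s / √n) ^ n) atTop (𝓝 l)) :
    Tendsto (fun n => rescaledPow f a n s) atTop (𝓝 l) := by
  have hwindow : Tendsto (fun n : ℕ => a * √(n : ℝ)) atTop atTop :=
    (Real.tendsto_sqrt_atTop.comp tendsto_natCast_atTop_atTop).const_mul_atTop ha
  refine hlim.congr' ?_
  filter_upwards [hwindow.eventually_gt_atTop |s|] with n hn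
  have hs : s ∈ Set.Ioc (-(a * √n)) (a * √n) := Set.Ioo_subset_Ioc_self (abs_lt.mp hn)
  rw [rescaledPow, Set.indicator_of_mem hs]

lemma tendsto_integral_norm_rescaledPow_sub {f g : ℝ → ℂ} {a c : ℝ} (hf : Continuous f)
    (ha : 0 < a) (hc : 0 < c) (hbound : ∀ t, |t| ≤ a → ‖f t‖ ≤ Real.exp (-c * t ^ 2))
    (hlim : ∀ s, Tendsto (fun n : ℕ => f (s / √n) ^ n) atTop (𝓝 (g s))) :
    Tendsto (fun n => ∫ s, ‖rescaledPow f a n s - g s‖) atTop (𝓝 0) := by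
  have hlim' (s : ℝ) := tendsto_rescaledPow ha (hlim s)
  have hmeas (n : ℕ) := (integrable_rescaledPow hf a n).aestronglyMeasurable
  have hg : AEStronglyMeasurable g :=
    aestronglyMeasurable_of_tendsto_ae atTop hmeas (.of_forall hlim')
  have hg_le (s : ℝ) : ‖g s‖ ≤ Real.exp (-c * s ^ 2) :=
    le_of_tendsto (hlim' s).norm (.of_forall fun n => norm_rescaledPow_le hbound n s)
  rw [← integral_zero ℝ ℝ]
  refine tendsto_integral_of_dominated_convergence (fun s => 2 * Real.exp (-c * s ^ 2))
    (fun n => ((hmeas n).sub hg).norm) ((integrable_exp_neg_mul_sq hc).const_mul 2)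
    (fun n => .of_forall fun s => ?_) (.of_forall fun s => ?_)
  · rw [norm_norm, two_mul]
    exact (norm_sub_le _ _).trans (add_le_add (norm_rescaledPow_le hbound n s) (hg_le s))
  · simpa using ((hlim' s).sub_const (g s)).norm

lemma sqrt_mul_integral_pow_mul_cexp (f : ℝ → ℂ) {a : ℝ} (ha : 0 ≤ a) {n : ℕ} (hn : n ≠ 0)
    (x : ℝ) :
    √n * ∫ t in -a..a, f t ^ n * cexp (-(x * √n * t) * I) =
      ∫ s, rescaledPow f a n s * cexp (-(x * s) * I) := by
  have hn0 : √(n : ℝ) ≠ 0 := by positivity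
  have hscale := intervalIntegral.integral_comp_div (a := -(a * √n)) (b := a * √n)
    (fun t : ℝ => f t ^ n * cexp (-(x * √n * t) * I)) hn0
  rw [neg_div, mul_div_cancel_right₀ _ hn0, real_smul] at hscale
  have hwindow : 0 ≤ a * √n := by positivity
  rw [← hscale, intervalIntegral.integral_of_le (by linarith),
    ← integral_indicator measurableSet_Ioc]
  refine integral_congr_ae (.of_forall fun s => ?_)
  have hcancel : (x * √n * (s / √n : ℝ) : ℂ) = x * s := by
    rw [mul_assoc, ← ofReal_mul, mul_div_cancel₀ _ hn0]
  simp only [rescaledPow, Set.indicator_apply, hcancel, ite_mul, zero_mul]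

lemma integral_gaussian_mul_cexp {v : ℝ≥0} (hv : v ≠ 0) (x : ℝ) :
    ∫ s : ℝ, cexp (-(v / 2) * s ^ 2) * cexp (-(x * s) * I) = 2 * π * gaussianPDFReal 0 v x := by
  have hv0 : (0 : ℝ) < v := by positivity
  have hb : 0 < (v / 2 : ℂ).re := by simpa using hv0
  have hsqrt : (π / (v / 2) : ℂ) ^ (1 / 2 : ℂ) = (2 * π * (√(2 * π * v))⁻¹ : ℝ) := by
    have hreal : √(π / (v / 2)) = 2 * π * (√(2 * π * v))⁻¹ := by
      have hprod : π / (v / 2) * (2 * π * v) = (2 * π) ^ 2 := by field_simp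
      rw [← div_eq_mul_inv, eq_div_iff (by positivity), ← Real.sqrt_mul (by positivity), hprod,
        Real.sqrt_sq (by positivity)]
    have h := congrArg ofReal hreal
    rw [Real.sqrt_eq_rpow, ofReal_cpow (by positivity)] at h
    push_cast at h ⊢
    exact h
  have h := fourierIntegral_gaussian hb (-x)
  rw [hsqrt] at h
  refine (integral_congr_ae (.of_forall fun s => ?_)).trans (h.trans ?_)
  · rw [mul_comm]
    congr 2
    ring
  · rw [gaussianPDFReal_def]
    push_cast
    ring_nf

lemma norm_integral_mul_cexp_sub_le {F G : ℝ → ℂ} (hF : Integrable F) (hG : Integrable G) (x : ℝ) :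
    ‖(∫ s, F s * cexp (-(x * s) * I)) - ∫ s, G s * cexp (-(x * s) * I)‖ ≤ ∫ s, ‖F s - G s‖ := by
  have hnorm (s : ℝ) : ‖cexp (-(x * s) * I)‖ = 1 := by
    simpa using norm_exp_ofReal_mul_I (-(x * s))
  have hint {H : ℝ → ℂ} (hH : Integrable H) : Integrable fun s => H s * cexp (-(x * s) * I) :=
    hH.mul_bdd (c := 1) (Continuous.aestronglyMeasurable (by fun_prop))
      (.of_forall fun s => (hnorm s).le)
  rw [← integral_sub (hint hF) (hint hG)]
  refine (norm_integral_le_integral_norm _).trans_eq ?_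
  simp only [← sub_mul, norm_mul, hnorm, mul_one]

lemma norm_aeval_le_eval_norm {p : ℝ[X]} (hp : ∀ k, 0 ≤ p.coeff k) (z : ℂ) :
    ‖aeval z p‖ ≤ p.eval ‖z‖ := by
  rw [aeval_eq_sum_range, eval_eq_sum_range]
  refine (norm_sum_le _ _).trans_eq (Finset.sum_congr rfl fun k _ => ?_)
  rw [norm_smul, norm_pow, Real.norm_of_nonneg (hp k)]

lemma norm_one_add_cexp_le {t : ℝ} (ht : |t| ≤ π) : ‖1 + cexp (t * I)‖ ≤ 2 - t ^ 2 / π ^ 2 := by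
  have hfactor : 1 + cexp (t * I) = cexp ((t / 2 : ℝ) * I) * (2 * Real.cos (t / 2) : ℝ) := by
    push_cast
    rw [two_cos, mul_add, ← Complex.exp_add, ← Complex.exp_add]
    ring_nf
    simp [add_comm]
  have hcos_nonneg : 0 ≤ Real.cos (t / 2) :=
    Real.cos_nonneg_of_neg_pi_div_two_le_of_le (by linarith [neg_le_of_abs_le ht])
      (by linarith [le_of_abs_le ht])
  have hcos_le := Real.cos_le_one_sub_mul_cos_sq (x := t / 2) (by
    rw [abs_div, abs_two]
    linarith [abs_nonneg t])
  rw [hfactor, norm_mul, norm_exp_ofReal_mul_I, one_mul, norm_real,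
    Real.norm_of_nonneg (by positivity)]
  calc 2 * Real.cos (t / 2) ≤ 2 * (1 - 2 / π ^ 2 * (t / 2) ^ 2) := by gcongr
    _ = 2 - t ^ 2 / π ^ 2 := by ring

/-- The mean of the distribution on `ℕ` with probability generating function `p`. -/
noncomputable def pgfMean (p : ℝ[X]) : ℝ :=
  p.sum fun k a => a * k

/-- The variance of the distribution on `ℕ` with probability generating function `p`. -/
noncomputable def pgfVariance (p : ℝ[X]) : ℝ :=
  p.sum fun k a => a * (k - pgfMean p) ^ 2

/-- The characteristic function, recentred at the mean, of the distribution on `ℕ` with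
probability generating function `p`. -/
noncomputable def centeredCharFun (p : ℝ[X]) (t : ℝ) : ℂ :=
  cexp (-(pgfMean p * t) * I) * aeval (cexp (t * I)) p

lemma continuous_centeredCharFun (p : ℝ[X]) : Continuous (centeredCharFun p) := by
  unfold centeredCharFun
  exact Continuous.mul (by fun_prop) (p.continuous_aeval.comp (by fun_prop))

lemma norm_centeredCharFun (p : ℝ[X]) (t : ℝ) :
    ‖centeredCharFun p t‖ = ‖aeval (cexp (t * I)) p‖ := by
  have h := norm_exp_ofReal_mul_I (-(pgfMean p * t))
  push_cast at h
  rw [centeredCharFun, norm_mul, h, one_mul]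

lemma centeredCharFun_eq_sum (p : ℝ[X]) (t : ℝ) :
    centeredCharFun p t = p.sum fun k a => a * cexp ((k - pgfMean p : ℝ) * t * I) := by
  rw [centeredCharFun, aeval_def, eval₂_eq_sum, sum_def, sum_def, Finset.mul_sum]
  refine Finset.sum_congr rfl fun k _ => ?_
  rw [coe_algebraMap, mul_left_comm, ← Complex.exp_nat_mul, ← Complex.exp_add]
  push_cast
  ring_nf

-- Splitting off `m (X ^ j + X ^ (j + 1))` isolates the cancellation between adjacent coefficients.
lemma norm_centeredCharFun_le {p : ℝ[X]} (hp : ∀ k, 0 ≤ p.coeff k) (hp1 : p.eval 1 = 1) (j : ℕ)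
    {t : ℝ} (ht : |t| ≤ π) :
    ‖centeredCharFun p t‖ ≤
      Real.exp (-(min (p.coeff j) (p.coeff (j + 1)) / π ^ 2) * t ^ 2) := by
  set m := min (p.coeff j) (p.coeff (j + 1))
  have hm0 : 0 ≤ m := le_min (hp _) (hp _)
  set r := p - C m * (X ^ j * (1 + X)) with hr
  have hr_nonneg (k : ℕ) : 0 ≤ r.coeff k := by
    have := hp k
    have := min_le_left (p.coeff j) (p.coeff (j + 1))
    have := min_le_right (p.coeff j) (p.coeff (j + 1))
    simp only [hr, mul_add, mul_one, ← pow_succ, coeff_sub, coeff_add, coeff_C_mul, coeff_X_pow]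
    split_ifs <;> grind
  have hz : ‖cexp (t * I)‖ = 1 := norm_exp_ofReal_mul_I t
  have hr_le : ‖aeval (cexp (t * I)) r‖ ≤ 1 - 2 * m := by
    refine (norm_aeval_le_eval_norm hr_nonneg _).trans_eq ?_
    simp only [hr, hz, eval_sub, eval_mul, eval_C, eval_pow, eval_X, eval_add, eval_one, hp1]
    ring
  have hsplit : aeval (cexp (t * I)) p =
      aeval (cexp (t * I)) r + m * (cexp (t * I) ^ j * (1 + cexp (t * I))) := by
    simp [hr]
  rw [norm_centeredCharFun, hsplit]
  calc _ ≤ (1 - 2 * m) + m * (2 - t ^ 2 / π ^ 2) := by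
        refine norm_add_le_of_le hr_le ?_
        rw [norm_mul, norm_mul, norm_pow, hz, one_pow, one_mul, norm_real, Real.norm_of_nonneg hm0]
        gcongr
        exact norm_one_add_cexp_le ht
    _ = -(m / π ^ 2) * t ^ 2 + 1 := by ring
    _ ≤ _ := Real.add_one_le_exp _

lemma isLittleO_centeredCharFun_sub {p : ℝ[X]} (hp1 : p.eval 1 = 1) :
    (fun t => centeredCharFun p t - (1 - pgfVariance p * t ^ 2 / 2))
      =o[𝓝 0] fun t : ℝ => t ^ 2 := by
  have hmass : ∑ k ∈ p.support, p.coeff k = 1 := by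
    simpa [eval_eq_sum, sum_def] using hp1
  have hmean : ∑ k ∈ p.support, p.coeff k * (k - pgfMean p) = 0 := by
    simp only [mul_sub, Finset.sum_sub_distrib, ← Finset.sum_mul, hmass, one_mul]
    exact sub_self _
  have hvar : ∑ k ∈ p.support, p.coeff k * (k - pgfMean p) ^ 2 = pgfVariance p := rfl
  have htaylor (t : ℝ) : (1 - pgfVariance p * t ^ 2 / 2 : ℂ) = ∑ k ∈ p.support,
      p.coeff k * (1 + (k - pgfMean p : ℝ) * t * I - (k - pgfMean p : ℝ) ^ 2 * t ^ 2 / 2) := by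
    have hmass' := congrArg ofReal hmass
    have hmean' := congrArg ofReal hmean
    push_cast at hmass' hmean'
    calc (1 - pgfVariance p * t ^ 2 / 2 : ℂ)
        = ∑ k ∈ p.support, (p.coeff k : ℂ) +
            (∑ k ∈ p.support, (p.coeff k : ℂ) * (k - pgfMean p)) * (t * I) -
            (∑ k ∈ p.support, (p.coeff k : ℂ) * (k - pgfMean p) ^ 2) * t ^ 2 / 2 := by
          rw [hmass', hmean', ← hvar]
          push_cast
          ring
      _ = _ := by
          simp only [Finset.sum_mul, Finset.sum_div, ← Finset.sum_add_distrib,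
            ← Finset.sum_sub_distrib]
          refine Finset.sum_congr rfl fun k _ => ?_
          push_cast
          ring
  have hsum := IsLittleO.sum (s := p.support) (fun (k : ℕ) _ =>
    (isLittleO_cexp_sub_taylor_two (k - pgfMean p)).const_mul_left (p.coeff k : ℂ))
  refine hsum.congr_left fun t => ?_
  rw [centeredCharFun_eq_sum, sum_def, htaylor, Finset.sum_apply, ← Finset.sum_sub_distrib]
  exact Finset.sum_congr rfl fun k _ => mul_sub _ _ _

lemma pgfVariance_pos {p : ℝ[X]} (hp : ∀ k, 0 ≤ p.coeff k) {i j : ℕ} (hij : i ≠ j)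
    (hi : p.coeff i ≠ 0) (hj : p.coeff j ≠ 0) : 0 < pgfVariance p := by
  have hterm (k : ℕ) : 0 ≤ p.coeff k * (k - pgfMean p) ^ 2 := mul_nonneg (hp k) (sq_nonneg _)
  refine (Finset.sum_nonneg (s := p.support) fun k _ => hterm k).lt_of_ne' fun hzero => hij ?_
  have hmean {k : ℕ} (hk : p.coeff k ≠ 0) : (k : ℝ) = pgfMean p := by
    have := (Finset.sum_eq_zero_iff_of_nonneg fun k _ => hterm k).mp hzero k
      (mem_support_iff.mpr hk)
    simpa [hk, sub_eq_zero] using this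
  exact_mod_cast (hmean hi).trans (hmean hj).symm

lemma two_pi_mul_coeff_eq_integral (p : ℂ[X]) (k : ℕ) :
    2 * π * p.coeff k = ∫ t in -π..π, p.eval (cexp (t * I)) * cexp (-(k * t) * I) := by
  have : Fact (0 < 2 * π) := ⟨Real.two_pi_pos⟩
  have h := fourierCoeff_eq_intervalIntegral (T := 2 * π) p.toAddCircle k (-π)
  rw [fourierCoeff_toAddCircle_natCast, show -π + 2 * π = π by ring] at h
  have hpi : (2 * π : ℂ) ≠ 0 := by exact_mod_cast Real.two_pi_pos.ne'
  have hcancel : (2 * π : ℂ) * (1 / (2 * π) : ℝ) = 1 := by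
    push_cast
    exact mul_one_div_cancel hpi
  rw [h, real_smul, ← mul_assoc, hcancel, one_mul]
  refine intervalIntegral.integral_congr fun t _ => ?_
  have hcharacter (m : ℤ) : fourier m (t : AddCircle (2 * π)) = cexp (m * t * I) := by
    rw [fourier_coe_apply]
    congr 1
    push_cast
    field_simp
  have heval : p.toAddCircle t = p.eval (cexp (t * I)) := by
    have hone := hcharacter 1
    rw [Int.cast_one, one_mul] at hone
    rw [toAddCircle, ← hone, fourier_one, aeval_continuousMap_apply]
    rfl
  simp only [hcharacter, heval, smul_eq_mul, mul_comm (cexp _)]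
  push_cast
  ring_nf

lemma two_pi_mul_coeff_pow_eq_integral (p : ℝ[X]) (n k : ℕ) :
    2 * π * ((p ^ n).coeff k : ℂ) =
      ∫ t in -π..π, centeredCharFun p t ^ n * cexp (-((k - n * pgfMean p : ℝ) * t) * I) := by
  have h := two_pi_mul_coeff_eq_integral ((p ^ n).map (algebraMap ℝ ℂ)) k
  rw [coeff_map, coe_algebraMap] at h
  rw [h]
  refine intervalIntegral.integral_congr fun t _ => ?_
  simp only [eval_map_algebraMap, map_pow, centeredCharFun, mul_pow]
  rw [mul_right_comm, mul_comm (aeval _ p ^ n), ← Complex.exp_nat_mul, ← Complex.exp_add]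
  push_cast
  ring_nf

lemma abs_sqrt_mul_coeff_pow_sub_gaussianPDFReal_le {p : ℝ[X]} (hvar : 0 < pgfVariance p) {n : ℕ}
    (hn : n ≠ 0) (k : ℕ) :
    |√n * (p ^ n).coeff k -
        gaussianPDFReal 0 (pgfVariance p).toNNReal ((k - n * pgfMean p) / √n)| ≤
      (∫ s, ‖rescaledPow (centeredCharFun p) π n s - cexp (-(pgfVariance p / 2) * s ^ 2)‖) /
        (2 * π) := by
  set x := (k - n * pgfMean p) / √n with hx
  have hxn : (x * √n : ℂ) = (k - n * pgfMean p : ℝ) := by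
    rw [hx, ← ofReal_mul, div_mul_cancel₀ _ (by positivity)]
  have hcoeff : 2 * π * (√n * (p ^ n).coeff k : ℂ) =
      ∫ s, rescaledPow (centeredCharFun p) π n s * cexp (-(x * s) * I) := by
    rw [← sqrt_mul_integral_pow_mul_cexp _ Real.pi_nonneg hn, hxn,
      ← two_pi_mul_coeff_pow_eq_integral]
    ring
  have hgauss := integral_gaussian_mul_cexp (Real.toNNReal_pos.mpr hvar).ne' x
  rw [Real.coe_toNNReal _ hvar.le] at hgauss
  have hF : Integrable (rescaledPow (centeredCharFun p) π n) :=
    integrable_rescaledPow (continuous_centeredCharFun p) π n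
  have hG : Integrable fun s : ℝ => cexp (-(pgfVariance p / 2) * s ^ 2) :=
    integrable_cexp_neg_mul_sq (by simpa using hvar)
  have h := norm_integral_mul_cexp_sub_le hF hG x
  rw [← hcoeff, hgauss, ← mul_sub, norm_mul] at h
  rw [le_div_iff₀' Real.two_pi_pos, ← Real.norm_eq_abs, ← norm_real]
  have h2π : ‖(2 * π : ℂ)‖ = 2 * π := by
    exact_mod_cast Real.norm_of_nonneg Real.two_pi_pos.le
  rw [h2π] at h
  exact_mod_cast h

theorem tendstoUniformly_sqrt_mul_coeff_pow_sub_gaussianPDFReal {p : ℝ[X]}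
    (hp : ∀ k, 0 ≤ p.coeff k) (hp1 : p.eval 1 = 1) {j : ℕ} (hj : 0 < p.coeff j)
    (hj' : 0 < p.coeff (j + 1)) :
    TendstoUniformly
      (fun (n k : ℕ) => √n * (p ^ n).coeff k -
        gaussianPDFReal 0 (pgfVariance p).toNNReal ((k - n * pgfMean p) / √n)) 0 atTop := by
  have hvar := pgfVariance_pos hp j.lt_succ_self.ne hj.ne' hj'.ne'
  have hL1 := tendsto_integral_norm_rescaledPow_sub (continuous_centeredCharFun p) Real.pi_pos
    (div_pos (lt_min hj hj') (by positivity)) (fun t => norm_centeredCharFun_le hp hp1 j)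
    (tendsto_pow_gaussian_of_isLittleO (isLittleO_centeredCharFun_sub hp1))
  have hbound := hL1.div_const (2 * π)
  rw [zero_div] at hbound
  rw [Metric.tendstoUniformly_iff]
  intro ε hε
  filter_upwards [hbound.eventually_lt_const hε, eventually_ne_atTop 0] with n hlt hn k
  rw [Pi.zero_apply, dist_zero_left, Real.norm_eq_abs]
  exact (abs_sqrt_mul_coeff_pow_sub_gaussianPDFReal_le hvar hn k).trans_lt hlt

lemma pgfMean_nonneg {p : ℝ[X]} (hp : ∀ k, 0 ≤ p.coeff k) : 0 ≤ pgfMean p :=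
  Finset.sum_nonneg fun k _ => mul_nonneg (hp k) k.cast_nonneg

lemma gaussianPDFReal_le_gaussianPDFReal_mean (μ : ℝ) (v : ℝ≥0) (x : ℝ) :
    gaussianPDFReal μ v x ≤ gaussianPDFReal μ v μ := by
  simp only [gaussianPDFReal_def]
  gcongr _ * Real.exp (-?_ / _)
  simpa using sq_nonneg (x - μ)

lemma tendsto_floor_natCast_mul_sub_div_sqrt {μ : ℝ} (hμ : 0 ≤ μ) :
    Tendsto (fun n : ℕ => (⌊n * μ⌋₊ - n * μ) / √(n : ℝ)) atTop (𝓝 0) := by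
  have hsqrt : Tendsto (fun n : ℕ => √(n : ℝ)) atTop atTop :=
    Real.tendsto_sqrt_atTop.comp tendsto_natCast_atTop_atTop
  refine squeeze_zero_norm (fun n => ?_) (tendsto_inv_atTop_zero.comp hsqrt)
  have hfloor : |(⌊n * μ⌋₊ - n * μ : ℝ)| ≤ 1 := by
    have := Nat.floor_le (mul_nonneg n.cast_nonneg hμ)
    have := Nat.lt_floor_add_one (n * μ)
    exact abs_le.mpr ⟨by linarith, by linarith⟩
  rw [norm_div, Real.norm_eq_abs, Real.norm_of_nonneg (Real.sqrt_nonneg _), Function.comp_apply,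
    ← one_div]
  gcongr

lemma tendsto_apply_of_tendstoUniformly_const {ι α β : Type*} [UniformSpace β] {F : ι → α → β}
    {l : Filter ι} {c : β} (hF : TendstoUniformly F (fun _ => c) l) (k : ι → α) :
    Tendsto (fun i => F i (k i)) l (𝓝 c) :=
  Uniform.tendsto_nhds_right.mpr fun u hu => (hF u hu).mono fun i hi => hi (k i)

lemma tendsto_sqrt_mul_max_coeff_pow {p : ℝ[X]} (hp : ∀ k, 0 ≤ p.coeff k) (hp1 : p.eval 1 = 1)
    {j : ℕ} (hj : 0 < p.coeff j) (hj' : 0 < p.coeff (j + 1)) {M : ℕ → ℝ}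
    (hM : ∀ n, IsGreatest (Set.range (p ^ n).coeff) (M n)) :
    Tendsto (fun n : ℕ => √n * M n) atTop (𝓝 (gaussianPDFReal 0 (pgfVariance p).toNNReal 0)) := by
  set g := gaussianPDFReal 0 (pgfVariance p).toNNReal with hg
  have hlocal (k : ℕ → ℕ) :
      Tendsto (fun n : ℕ => √n * (p ^ n).coeff (k n) - g ((k n - n * pgfMean p) / √n))
        atTop (𝓝 0) :=
    tendsto_apply_of_tendstoUniformly_const
      (tendstoUniformly_sqrt_mul_coeff_pow_sub_gaussianPDFReal hp hp1 hj hj') k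
  have hlower : Tendsto (fun n : ℕ => √n * (p ^ n).coeff ⌊n * pgfMean p⌋₊) atTop (𝓝 (g 0)) := by
    have hcont : Continuous g := by
      rw [hg, gaussianPDFReal_def]
      fun_prop
    have hcentre := (hcont.tendsto 0).comp
      (tendsto_floor_natCast_mul_sub_div_sqrt (pgfMean_nonneg hp))
    simpa using (hlocal fun n => ⌊n * pgfMean p⌋₊).add hcentre
  choose k hk using fun n => (hM n).1
  refine tendsto_of_tendsto_of_tendsto_of_le_of_le hlower
    (by simpa using (hlocal k).add_const (g 0)) (fun n => ?_) fun n => ?_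
  · exact mul_le_mul_of_nonneg_left ((hM n).2 ⟨_, rfl⟩) (Real.sqrt_nonneg _)
  · have hpeak := gaussianPDFReal_le_gaussianPDFReal_mean 0 (pgfVariance p).toNNReal
      ((k n - n * pgfMean p) / √n)
    simp only [← hk]
    linarith

theorem max_polyCoeff_asymptotic_general {p : ℝ[X]} (hp : ∀ k, 0 ≤ p.coeff k)
    (hp1 : p.eval 1 = 1) {j : ℕ} (hj : 0 < p.coeff j) (hj' : 0 < p.coeff (j + 1)) {M : ℕ → ℝ}
    (hM : ∀ n, IsGreatest (Set.range (p ^ n).coeff) (M n)) :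
    Tendsto (fun n => M n * √(2 * π * pgfVariance p * n)) atTop (𝓝 1) := by
  have hvar := pgfVariance_pos hp j.lt_succ_self.ne hj.ne' hj'.ne'
  have hpeak : gaussianPDFReal 0 (pgfVariance p).toNNReal 0 * √(2 * π * pgfVariance p) = 1 := by
    rw [gaussianPDFReal_def, Real.coe_toNNReal _ hvar.le]
    simp [(by positivity : √(2 * π * pgfVariance p) ≠ 0)]
  rw [← hpeak]
  refine ((tendsto_sqrt_mul_max_coeff_pow hp hp1 hj hj' hM).mul_const _).congr fun n => ?_
  rw [Real.sqrt_mul (by positivity) (n : ℝ)]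
  ring

/-- The probability generating function of the uniform distribution on `{0, …, q - 1}`. -/
noncomputable def uniformPGF (q : ℕ) : ℝ[X] :=
  C (q : ℝ)⁻¹ * ∑ i ∈ Finset.range q, X ^ i

lemma coeff_uniformPGF (q k : ℕ) : (uniformPGF q).coeff k = if k < q then (q : ℝ)⁻¹ else 0 := by
  simp [uniformPGF, coeff_X_pow]

lemma coeff_uniformPGF_pos {q k : ℕ} (hk : k < q) : 0 < (uniformPGF q).coeff k := by
  rw [coeff_uniformPGF, if_pos hk]
  have : 0 < q := by lia
  positivity

lemma coeff_uniformPGF_nonneg (q k : ℕ) : 0 ≤ (uniformPGF q).coeff k := by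
  rw [coeff_uniformPGF]
  positivity

lemma eval_one_uniformPGF {q : ℕ} (hq : q ≠ 0) : (uniformPGF q).eval 1 = 1 := by
  simp [uniformPGF, eval_finsetSum, hq]

lemma sum_uniformPGF (q : ℕ) (f : ℕ → ℝ) :
    ((uniformPGF q).sum fun k a => a * f k) = (q : ℝ)⁻¹ * ∑ k ∈ Finset.range q, f k := by
  have hsupp : (uniformPGF q).support ⊆ Finset.range q := fun k hk => by
    rw [mem_support_iff, coeff_uniformPGF] at hk
    exact Finset.mem_range.mpr (of_not_not fun h => hk (if_neg h))
  rw [sum_eq_of_subset _ (fun k => zero_mul (f k)) hsupp, Finset.mul_sum]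
  exact Finset.sum_congr rfl fun k hk => by
    rw [coeff_uniformPGF, if_pos (Finset.mem_range.mp hk)]

lemma pgfMean_uniformPGF {q : ℕ} (hq : q ≠ 0) : pgfMean (uniformPGF q) = (q - 1) / 2 := by
  have hsum (r : ℕ) : ∑ k ∈ Finset.range r, (k : ℝ) = r * (r - 1) / 2 := by
    induction r with
    | zero => simp
    | succ r ih =>
      rw [Finset.sum_range_succ, ih]
      push_cast
      ring
  rw [pgfMean, sum_uniformPGF, hsum]
  field_simp

lemma pgfVariance_uniformPGF {q : ℕ} (hq : q ≠ 0) :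
    pgfVariance (uniformPGF q) = (q ^ 2 - 1) / 12 := by
  have hsum (m : ℝ) (r : ℕ) : ∑ k ∈ Finset.range r, (k - m : ℝ) ^ 2 =
      r * ((r - 1) * (2 * r - 1) / 6 - m * (r - 1) + m ^ 2) := by
    induction r with
    | zero => simp
    | succ r ih =>
      rw [Finset.sum_range_succ, ih]
      push_cast
      ring
  rw [pgfVariance, sum_uniformPGF, hsum, pgfMean_uniformPGF hq]
  field_simp
  ring

lemma coeff_uniformPGF_pow (n q k : ℕ) :
    (uniformPGF q ^ n).coeff k = polyCoeff n q k / q ^ n := by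
  have hcast : (∑ i ∈ Finset.range q, X ^ i : ℝ[X]) =
      (∑ i ∈ Finset.range q, X ^ i : ℕ[X]).map (Nat.castRingHom ℝ) := by
    simp [Polynomial.map_sum]
  rw [uniformPGF, mul_pow, ← C_pow, coeff_C_mul, hcast, ← Polynomial.map_pow, coeff_map, polyCoeff,
    eq_natCast, inv_pow, inv_mul_eq_div]

lemma polyCoeff_eq_zero {n q k : ℕ} (hk : (q - 1) * n < k) : polyCoeff n q k = 0 := by
  refine coeff_eq_zero_of_natDegree_lt (lt_of_le_of_lt ?_ hk)
  rw [mul_comm]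
  refine natDegree_pow_le_of_le n (natDegree_sum_le_of_forall_le _ _ fun i hi => ?_)
  rw [natDegree_X_pow]
  exact Nat.le_sub_one_of_lt (Finset.mem_range.mp hi)

lemma isGreatest_range_polyCoeff (n q : ℕ) :
    IsGreatest (Set.range (polyCoeff n q))
      ((Finset.range ((q - 1) * n + 1)).sup fun k => polyCoeff n q k) := by
  constructor
  · obtain ⟨k, -, hk⟩ := Finset.exists_mem_eq_sup _
      (Finset.nonempty_range_add_one (n := (q - 1) * n)) (polyCoeff n q)
    exact ⟨k, hk.symm⟩
  · rintro _ ⟨k, rfl⟩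
    by_cases hk : k ∈ Finset.range ((q - 1) * n + 1)
    · exact Finset.le_sup hk
    · rw [polyCoeff_eq_zero (by simpa [Nat.lt_succ_iff] using hk)]
      exact zero_le

lemma isGreatest_range_coeff_uniformPGF_pow (n q : ℕ) :
    IsGreatest (Set.range (uniformPGF q ^ n).coeff)
      (((Finset.range ((q - 1) * n + 1)).sup fun k => polyCoeff n q k : ℕ) / q ^ n) := by
  have hmono : Monotone fun m : ℕ => (m : ℝ) / q ^ n := fun a b h => by
    dsimp only
    gcongr
  have hcoeff : (uniformPGF q ^ n).coeff = (fun m : ℕ => (m : ℝ) / q ^ n) ∘ polyCoeff n q :=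
    funext (coeff_uniformPGF_pow n q)
  rw [hcoeff, Set.range_comp]
  exact hmono.map_isGreatest (isGreatest_range_polyCoeff n q)

end LocalLimit

theorem max_polyCoeff_asymptotic (q : ℕ) (hq : 2 ≤ q) :
    Tendsto
      (fun n : ℕ =>
        (((Finset.range ((q - 1) * n + 1)).sup fun k => polyCoeff n q k : ℕ) : ℝ) *
          Real.sqrt ((((q : ℝ) ^ 2 - 1) * Real.pi * n) / 6) / (q : ℝ) ^ n)
      atTop (nhds 1) := by
  refine (max_polyCoeff_asymptotic_general (coeff_uniformPGF_nonneg q)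
    (eval_one_uniformPGF (by lia)) (coeff_uniformPGF_pos (k := 0) (by lia))
    (coeff_uniformPGF_pos (by lia)) (isGreatest_range_coeff_uniformPGF_pow · q)).congr fun n => ?_
  rw [pgfVariance_uniformPGF (by lia)]
  ring_nf
end
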